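/- arXiv:1810.02839 — 3 statements merged into one kernel-verified Lean document; each statement's English description precedes it below -/
import Mathlib

section
/- There exists a constant c > 0 such that for every integer n ≥ 2, every set S of n points in the plane in general position, and any two trees T, T' ∈ 𝒯(S), the tree T can be transformed into T' by a sequence of at most c·log n simultaneous rotations (i.e., there is a sequence T = T₀, T₁, …, T_k = T' in 𝒯(S) with k ≤ c·log n in which each T_{i+1} is obtained from T_i by one simultaneous rotation). -/
open scoped Classical

noncomputable section

/-- Points in the plane. -/
abbrev Pt : Type := ℝ × ℝ

/-- The closed straight-line segment spanned by an (unordered) edge. -/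
def segOf (e : Sym2 Pt) : Set Pt :=
  Sym2.lift ⟨fun p q => segment ℝ p q, fun p q => segment_symm ℝ p q⟩ e

/-- The set of endpoints of an edge. -/
def epts (e : Sym2 Pt) : Set Pt := {p | p ∈ e}

/-- Two edges intersect in at most common endpoints (they do not cross). -/
def NoCrossPair (e f : Sym2 Pt) : Prop := segOf e ∩ segOf f ⊆ epts e ∩ epts f

/-- A set of edges is noncrossing: any two distinct edges meet in at most a common endpoint. -/
def NoCross (E : Finset (Sym2 Pt)) : Prop := ∀ e ∈ E, ∀ f ∈ E, e ≠ f → NoCrossPair e f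

/-- `E` is the edge set of a noncrossing straight-line spanning tree on the point set `S`:
all edges are nondegenerate with endpoints in `S`, pairwise noncrossing, there are
`|S| - 1` of them, and they connect all of `S`. -/
def IsPST (S : Finset Pt) (E : Finset (Sym2 Pt)) : Prop :=
  (∀ e ∈ E, ¬ e.IsDiag ∧ ∀ p ∈ e, p ∈ S) ∧
  NoCross E ∧ E.card + 1 = S.card ∧
  ∀ p ∈ S, ∀ q ∈ S, Relation.ReflTransGen (fun a b => s(a, b) ∈ E) p q

/-- `S` is in general position: no three of its points are collinear. -/
def GenPos (S : Finset Pt) : Prop :=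
  ∀ p ∈ S, ∀ q ∈ S, ∀ r ∈ S, p ≠ q → p ≠ r → q ≠ r → ¬ Collinear ℝ ({p, q, r} : Set Pt)

/-- `S` is in convex position: every point of `S` is a vertex of the convex hull of `S`. -/
def ConvexPos (S : Finset Pt) : Prop :=
  ∀ p ∈ S, p ∉ convexHull ℝ ((S : Set Pt) \ {p})

/-- The open interior of the triangle with vertices `p`, `q`, `r`. -/
def triInt (p q r : Pt) : Set Pt := interior (convexHull ℝ ({p, q, r} : Set Pt))

/-- `y` can be reached from `x` by a sequence of at most `m` `step`-operations. -/
def ReachesIn {α : Type*} (step : α → α → Prop) (m : ℕ) (x y : α) : Prop :=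
  ∃ k ≤ m, ∃ f : ℕ → α, f 0 = x ∧ f k = y ∧ ∀ i < k, step (f i) (f (i + 1))

/-- A simultaneous rotation from `E₁` to `E₂`: a bijection `π` between the removed and the
inserted edges such that each `e` shares an endpoint with `π e` and `π e` crosses no edge
of `E₁`. -/
def SimRotation (S : Finset Pt) (E₁ E₂ : Finset (Sym2 Pt)) : Prop :=
  IsPST S E₁ ∧ IsPST S E₂ ∧ ∃ π : Sym2 Pt → Sym2 Pt,
    Set.BijOn π ↑(E₁ \ E₂) ↑(E₂ \ E₁) ∧
    ∀ e ∈ E₁ \ E₂, (∃ p, p ∈ e ∧ p ∈ π e) ∧ ∀ f ∈ E₁, NoCrossPair (π e) f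

/-- An empty-triangle rotation replaces an edge `pq` by an adjacent edge `pr` such that
no edge of either tree meets the interior of the triangle `pqr`. -/
def EmptyTriRot (S : Finset Pt) (E₁ E₂ : Finset (Sym2 Pt)) : Prop :=
  IsPST S E₁ ∧ IsPST S E₂ ∧ ∃ p q r : Pt,
    E₁ \ E₂ = {s(p, q)} ∧ E₂ \ E₁ = {s(p, r)} ∧
    ∀ g ∈ E₁ ∪ E₂, Disjoint (segOf g) (triInt p q r)

/-- A simultaneous empty-triangle rotation. -/
def SimEmptyTriRot (S : Finset Pt) (E₁ E₂ : Finset (Sym2 Pt)) : Prop :=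
  IsPST S E₁ ∧ IsPST S E₂ ∧ ∃ π : Sym2 Pt → Sym2 Pt,
    Set.BijOn π ↑(E₁ \ E₂) ↑(E₂ \ E₁) ∧
    ∀ e ∈ E₁ \ E₂, ∃ p q r : Pt, e = s(p, q) ∧ π e = s(p, r) ∧
      ∀ g ∈ E₁ ∪ E₂, Disjoint (segOf g) (triInt p q r)

/-- An edge slide replaces `pq` by `pr`, where `qr` is an edge of both trees and no edge of
either tree meets the interior of the triangle `pqr`. -/
def EdgeSlide (S : Finset Pt) (E₁ E₂ : Finset (Sym2 Pt)) : Prop :=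
  IsPST S E₁ ∧ IsPST S E₂ ∧ ∃ p q r : Pt,
    E₁ \ E₂ = {s(p, q)} ∧ E₂ \ E₁ = {s(p, r)} ∧
    s(q, r) ∈ E₁ ∧ s(q, r) ∈ E₂ ∧
    ∀ g ∈ E₁ ∪ E₂, Disjoint (segOf g) (triInt p q r)

/-- A simultaneous edge slide. -/
def SimEdgeSlide (S : Finset Pt) (E₁ E₂ : Finset (Sym2 Pt)) : Prop :=
  IsPST S E₁ ∧ IsPST S E₂ ∧ ∃ π : Sym2 Pt → Sym2 Pt,
    Set.BijOn π ↑(E₁ \ E₂) ↑(E₂ \ E₁) ∧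
    ∀ e ∈ E₁ \ E₂, ∃ p q r : Pt, e = s(p, q) ∧ π e = s(p, r) ∧
      s(q, r) ∈ E₁ ∧ s(q, r) ∈ E₂ ∧
      ∀ g ∈ E₁ ∪ E₂, Disjoint (segOf g) (triInt p q r)

/-- `e` is an edge of the convex hull of `S`: it joins two distinct points of `S` and its
segment lies on the boundary of the convex hull of `S`. -/
def IsHullEdge (S : Finset Pt) (e : Sym2 Pt) : Prop :=
  ∃ u v : Pt, e = s(u, v) ∧ u ∈ S ∧ v ∈ S ∧ u ≠ v ∧
    segment ℝ u v ⊆ frontier (convexHull ℝ (S : Set Pt))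

/-- The spanning star centered at `v`. -/
def starAt (S : Finset Pt) (v : Pt) : Finset (Sym2 Pt) := (S.erase v).image (fun w => s(v, w))

/-- An edge-labeled tree: an edge set together with a labeling function. -/
abbrev LTree := Finset (Sym2 Pt) × (Sym2 Pt → ℕ)

/-- `T` is an edge-labeled noncrossing straight-line spanning tree on `S`: its edge set is in
`𝒯(S)` and its labeling is a bijection from the edges onto `{1, …, |S| - 1}`
(normalized to `0` on non-edges). -/
def IsLabeledPST (S : Finset Pt) (T : LTree) : Prop :=
  IsPST S T.1 ∧ Set.BijOn T.2 ↑T.1 (Set.Icc 1 (S.card - 1)) ∧ ∀ e, e ∉ T.1 → T.2 e = 0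

/-- A simultaneous exchange on edge-labeled trees: an arbitrary bijection between removed and
inserted edges transferring labels, all common edges keeping their labels. -/
def LabSimExchange (S : Finset Pt) (T₁ T₂ : LTree) : Prop :=
  IsLabeledPST S T₁ ∧ IsLabeledPST S T₂ ∧ ∃ π : Sym2 Pt → Sym2 Pt,
    Set.BijOn π ↑(T₁.1 \ T₂.1) ↑(T₂.1 \ T₁.1) ∧
    (∀ e ∈ T₁.1 \ T₂.1, T₂.2 (π e) = T₁.2 e) ∧
    ∀ e ∈ T₁.1 ∩ T₂.1, T₂.2 e = T₁.2 e

/-- A rotation on edge-labeled trees: the removed and inserted edges share an endpoint and do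
not cross, the label of the removed edge is transferred, and all other labels are kept. -/
def LabRotation (S : Finset Pt) (T₁ T₂ : LTree) : Prop :=
  IsLabeledPST S T₁ ∧ IsLabeledPST S T₂ ∧ ∃ e₁ e₂ : Sym2 Pt,
    T₁.1 \ T₂.1 = {e₁} ∧ T₂.1 \ T₁.1 = {e₂} ∧
    (∃ p, p ∈ e₁ ∧ p ∈ e₂) ∧ NoCrossPair e₁ e₂ ∧
    T₂.2 e₂ = T₁.2 e₁ ∧ ∀ e ∈ T₁.1 ∩ T₂.1, T₂.2 e = T₁.2 e

/-- An edge slide on edge-labeled trees, transferring the label of the slid edge. -/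
def LabEdgeSlide (S : Finset Pt) (T₁ T₂ : LTree) : Prop :=
  IsLabeledPST S T₁ ∧ IsLabeledPST S T₂ ∧ ∃ p q r : Pt,
    T₁.1 \ T₂.1 = {s(p, q)} ∧ T₂.1 \ T₁.1 = {s(p, r)} ∧
    s(q, r) ∈ T₁.1 ∧ s(q, r) ∈ T₂.1 ∧
    (∀ g ∈ T₁.1 ∪ T₂.1, Disjoint (segOf g) (triInt p q r)) ∧
    T₂.2 (s(p, r)) = T₁.2 (s(p, q)) ∧ ∀ e ∈ T₁.1 ∩ T₂.1, T₂.2 e = T₁.2 e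


def edg (S : Finset Pt) (r : Pt) (p : Pt → Pt) : Finset (Sym2 Pt) :=
  (S.erase r).image (fun v => s(v, p v))

structure Par (S : Finset Pt) (r : Pt) (G : Finset (Sym2 Pt)) (p : Pt → Pt) : Prop where
  mem : ∀ v ∈ S, v ≠ r → p v ∈ S
  edge : ∀ v ∈ S, v ≠ r → s(v, p v) ∈ G
  rank : ∃ ρ : Pt → ℕ, ∀ v ∈ S, v ≠ r → ρ (p v) < ρ v

lemma mem_edg {S : Finset Pt} {r : Pt} {p : Pt → Pt} {e : Sym2 Pt} :
    e ∈ edg S r p ↔ ∃ v ∈ S, v ≠ r ∧ s(v, p v) = e := by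
  simp only [edg, Finset.mem_image, Finset.mem_erase]
  constructor
  · rintro ⟨v, ⟨h1, h2⟩, h3⟩; exact ⟨v, h2, h1, h3⟩
  · rintro ⟨v, h1, h2, h3⟩; exact ⟨v, ⟨h2, h1⟩, h3⟩

lemma Par.inj {S : Finset Pt} {r : Pt} {G : Finset (Sym2 Pt)} {p : Pt → Pt} (h : Par S r G p)
    {v w : Pt} (hv : v ∈ S) (hvr : v ≠ r) (hw : w ∈ S) (hwr : w ≠ r)
    (he : s(v, p v) = s(w, p w)) : v = w := by
  obtain ⟨ρ, hρ⟩ := h.rank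
  rw [Sym2.eq_iff] at he
  rcases he with ⟨h1, _⟩ | ⟨h1, h2⟩
  · exact h1
  · have a := hρ v hv hvr
    have b := hρ w hw hwr
    rw [h2] at a; rw [← h1] at b; omega

lemma Par.isPST {S : Finset Pt} {r : Pt} {G : Finset (Sym2 Pt)} {p : Pt → Pt} (hr : r ∈ S)
    (hG : NoCross G) (h : Par S r G p) : IsPST S (edg S r p) := by
  obtain ⟨ρ, hρ⟩ := h.rank
  have hsub : ∀ e ∈ edg S r p, e ∈ G := by
    intro e he
    obtain ⟨v, hv, hvr, rfl⟩ := mem_edg.1 he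
    exact h.edge v hv hvr
  refine ⟨?_, ?_, ?_, ?_⟩
  · intro e he
    obtain ⟨v, hv, hvr, rfl⟩ := mem_edg.1 he
    refine ⟨?_, ?_⟩
    · intro hd
      have : v = p v := by simpa using hd
      have := hρ v hv hvr
      grind
    · intro q hq
      rcases Sym2.mem_iff.1 hq with rfl | rfl
      · exact hv
      · exact h.mem v hv hvr
  · intro e he f hf hne
    exact hG e (hsub e he) f (hsub f hf) hne
  · unfold edg
    rw [Finset.card_image_of_injOn]
    · exact Finset.card_erase_add_one hr
    · intro v hv w hw hvw
      have hv := Finset.mem_erase.1 (Finset.mem_coe.1 hv)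
      have hw := Finset.mem_erase.1 (Finset.mem_coe.1 hw)
      exact h.inj hv.2 hv.1 hw.2 hw.1 hvw
  · have key : ∀ n, ∀ v ∈ S, ρ v ≤ n →
        Relation.ReflTransGen (fun a b => s(a, b) ∈ edg S r p) v r := by
      intro n
      induction n with
      | zero =>
        intro v hv hn
        by_cases hvr : v = r
        · subst hvr; exact Relation.ReflTransGen.refl
        · have := hρ v hv hvr; omega
      | succ n ih =>
        intro v hv hn
        by_cases hvr : v = r
        · subst hvr; exact Relation.ReflTransGen.refl
        · have := hρ v hv hvr
          exact Relation.ReflTransGen.head (mem_edg.2 ⟨v, hv, hvr, rfl⟩)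
            (ih (p v) (h.mem v hv hvr) (by omega))
    have sym : ∀ a b, Relation.ReflTransGen (fun a b => s(a, b) ∈ edg S r p) a b →
        Relation.ReflTransGen (fun a b => s(a, b) ∈ edg S r p) b a := by
      intro a b hab
      induction hab with
      | refl => exact Relation.ReflTransGen.refl
      | tail _ h2 ih => exact Relation.ReflTransGen.head (by rw [Sym2.eq_swap]; exact h2) ih
    intro a ha b hb
    exact (key _ a ha le_rfl).trans (sym _ _ (key _ b hb le_rfl))

lemma Par.rot {S : Finset Pt} {r : Pt} {G : Finset (Sym2 Pt)} {p1 p2 : Pt → Pt} (hr : r ∈ S)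
    (hG : NoCross G) (h1 : Par S r G p1) (h2 : Par S r G p2)
    (hc : ∀ v ∈ S, v ≠ r → ∀ w ∈ S, w ≠ r → p2 v = w → p1 w = v → False) :
    SimRotation S (edg S r p1) (edg S r p2) := by
  refine ⟨h1.isPST hr hG, h2.isPST hr hG, ?_⟩
  have hex : ∀ e : Sym2 Pt, ∃ v, e ∈ edg S r p1 → (v ∈ S ∧ v ≠ r ∧ s(v, p1 v) = e) := by
    intro e
    by_cases he : e ∈ edg S r p1
    · obtain ⟨v, hv⟩ := mem_edg.1 he
      exact ⟨v, fun _ => hv⟩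
    · exact ⟨r, fun h => absurd h he⟩
  choose c hcc using hex
  have hnot1 : ∀ v ∈ S, v ≠ r → s(v, p1 v) ∉ edg S r p2 → s(v, p2 v) ∉ edg S r p1 := by
    intro v hv hvr hne hmem
    obtain ⟨w, hw, hwr, hwe⟩ := mem_edg.1 hmem
    rw [Sym2.eq_iff] at hwe
    rcases hwe with ⟨rfl, h⟩ | ⟨h, h'⟩
    · exact hne (mem_edg.2 ⟨w, hw, hwr, by rw [h]⟩)
    · exact hc v hv hvr w hw hwr h.symm h'
  have hnot2 : ∀ v ∈ S, v ≠ r → s(v, p2 v) ∉ edg S r p1 → s(v, p1 v) ∉ edg S r p2 := by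
    intro v hv hvr hne hmem
    obtain ⟨w, hw, hwr, hwe⟩ := mem_edg.1 hmem
    rw [Sym2.eq_iff] at hwe
    rcases hwe with ⟨rfl, h⟩ | ⟨h, h'⟩
    · exact hne (mem_edg.2 ⟨w, hw, hwr, by rw [h]⟩)
    · exact hc w hw hwr v hv hvr h' h.symm
  refine ⟨fun e => s(c e, p2 (c e)), ⟨?_, ?_, ?_⟩, ?_⟩
  · intro e he
    rw [Finset.mem_coe, Finset.mem_sdiff] at he ⊢
    obtain ⟨a, b, d⟩ := hcc e he.1
    refine ⟨mem_edg.2 ⟨c e, a, b, rfl⟩, hnot1 _ a b ?_⟩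
    rw [d]; exact he.2
  · intro e he f hf hef
    rw [Finset.mem_coe, Finset.mem_sdiff] at he hf
    obtain ⟨a, b, d⟩ := hcc e he.1
    obtain ⟨a', b', d'⟩ := hcc f hf.1
    have := h2.inj a b a' b' hef
    rw [← d, ← d', this]
  · intro f hf
    rw [Finset.mem_coe, Finset.mem_sdiff] at hf
    obtain ⟨v, hv, hvr, rfl⟩ := mem_edg.1 hf.1
    have hm : s(v, p1 v) ∈ edg S r p1 := mem_edg.2 ⟨v, hv, hvr, rfl⟩
    refine ⟨s(v, p1 v), ?_, ?_⟩
    · rw [Finset.mem_coe, Finset.mem_sdiff]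
      exact ⟨hm, hnot2 v hv hvr hf.2⟩
    · obtain ⟨a, b, d⟩ := hcc _ hm
      have := h1.inj a b hv hvr d
      simp only [this]
  · intro e he
    rw [Finset.mem_sdiff] at he
    obtain ⟨a, b, d⟩ := hcc e he.1
    refine ⟨⟨c e, ?_, by simp⟩, ?_⟩
    · have := Sym2.mem_mk_left (c e) (p1 (c e))
      rwa [d] at this
    · intro f hf
      have hn := hnot1 _ a b (by rw [d]; exact he.2)
      obtain ⟨v, hv, hvr, rfl⟩ := mem_edg.1 hf
      exact hG _ (h2.edge _ a b) _ (h1.edge _ hv hvr) (fun h => hn (h ▸ hf))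

/-- vertices at walk distance `n` from `r` -/
def lvl (E : Finset (Sym2 Pt)) (r : Pt) : ℕ → Pt → Prop
  | 0, v => v = r
  | n + 1, v => ∃ w, s(v, w) ∈ E ∧ lvl E r n w

lemma exists_par {S : Finset Pt} {r : Pt} {E : Finset (Sym2 Pt)} (hr : r ∈ S) (h : IsPST S E) :
    ∃ p : Pt → Pt, ∃ ρ : Pt → ℕ, edg S r p = E ∧ (∀ v ∈ S, v ≠ r → p v ∈ S) ∧
      (∀ v ∈ S, v ≠ r → s(v, p v) ∈ E) ∧ ∀ v ∈ S, v ≠ r → ρ v = ρ (p v) + 1 := by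
  obtain ⟨hE, hN, hcard, hconn⟩ := h
  have hl : ∀ v ∈ S, ∃ n, lvl E r n v := by
    intro v hv
    have := hconn v hv r hr
    induction this using Relation.ReflTransGen.head_induction_on with
    | refl => exact ⟨0, rfl⟩
    | head h1 _ ih => 
      have := (hE _ h1).2
      obtain ⟨n, hn⟩ := ih (this _ (by simp))
      exact ⟨n + 1, _, h1, hn⟩
  let ρ : Pt → ℕ := fun v => sInf {n | lvl E r n v}
  have hρ : ∀ v ∈ S, lvl E r (ρ v) v := fun v hv => Nat.sInf_mem (s := {n | lvl E r n v}) (hl v hv)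
  have hmin : ∀ v n, lvl E r n v → ρ v ≤ n := fun v n hn => Nat.sInf_le hn
  have hex : ∀ v, ∃ w, v ∈ S → v ≠ r → w ∈ S ∧ s(v, w) ∈ E ∧ ρ v = ρ w + 1 := by
    intro v
    by_cases hv : v ∈ S
    · by_cases hvr : v = r
      · exact ⟨r, fun _ h => absurd hvr h⟩
      · have h1 := hρ v hv
        rcases hn : ρ v with _ | n
        · rw [hn] at h1; exact absurd h1 hvr
        · rw [hn] at h1
          obtain ⟨w, hw, hlw⟩ := h1
          have hwS := (hE _ hw).2 w (by simp)
          refine ⟨w, fun _ _ => ⟨hwS, hw, ?_⟩⟩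
          have a := hmin w n hlw
          have b := hmin v (ρ w + 1) ⟨w, hw, hρ w hwS⟩
          omega
    · exact ⟨r, fun h => absurd h hv⟩
  choose p hp using hex
  refine ⟨p, ρ, ?_, fun v a b => (hp v a b).1, fun v a b => (hp v a b).2.1,
    fun v a b => (hp v a b).2.2⟩
  have hpar : Par S r E p := ⟨fun v a b => (hp v a b).1, fun v a b => (hp v a b).2.1,
    ρ, fun v a b => by have := (hp v a b).2.2; omega⟩
  apply Finset.eq_of_subset_of_card_le
  · intro e he
    obtain ⟨v, hv, hvr, rfl⟩ := mem_edg.1 he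
    exact hpar.edge v hv hvr
  · have := (hpar.isPST hr hN).2.2.1
    omega

lemma reaches_trans {α : Type*} {st : α → α → Prop} {m n : ℕ} {x y z : α}
    (h1 : ReachesIn st m x y) (h2 : ReachesIn st n y z) : ReachesIn st (m + n) x z := by
  obtain ⟨k, hk, f, f0, fk, hf⟩ := h1
  obtain ⟨l, hl, g, g0, gl, hg⟩ := h2
  refine ⟨k + l, by omega, fun i => if i ≤ k then f i else g (i - k), by simp [f0], ?_, ?_⟩
  · by_cases h : l = 0
    · subst h; simp [fk, ← gl, g0]
    · have : ¬ (k + l ≤ k) := by omega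
      simp [this, gl]
  · intro i hi
    by_cases h : i < k
    · have h1 : i ≤ k := h.le
      have h2 : i + 1 ≤ k := h
      simpa [h1, h2] using hf i h
    · by_cases h' : i = k
      · subst h'
        have := hg 0 (by omega)
        simpa [fk, ← g0] using this
      · have h1 : ¬ i ≤ k := by omega
        have h2 : ¬ i + 1 ≤ k := by omega
        have := hg (i - k) (by omega)
        have e : i + 1 - k = i - k + 1 := by omega
        simpa [h1, h2, e] using this

lemma reaches_one {α : Type*} {st : α → α → Prop} {x y : α} (h : st x y) : ReachesIn st 1 x y :=
  ⟨1, le_rfl, fun i => if i = 0 then x else y, by simp, by simp, by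
    intro i hi
    have : i = 0 := by omega
    subst this; simpa using h⟩

lemma reaches_zero {α : Type*} {st : α → α → Prop} {x : α} : ReachesIn st 0 x x :=
  ⟨0, le_rfl, fun _ => x, rfl, rfl, by simp⟩


/-- Three simultaneous rotations (each also reversible). -/
lemma three_steps {S : Finset Pt} {r : Pt} {G E : Finset (Sym2 Pt)} (hr : r ∈ S)
    (hG : NoCross G) (hE : IsPST S E) (hEG : E ⊆ G) (A B : Pt → Pt) (σ : Pt → ℕ)
    (hA : ∀ v ∈ S, v ≠ r → A v ∈ S ∧ s(v, A v) ∈ G ∧ σ (A v) < σ v)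
    (hB : ∀ v ∈ S, v ≠ r → B v ∈ S ∧ s(v, B v) ∈ G ∧ σ (B v) < σ v)
    (hAB : ∀ v ∈ S, v ≠ r → (A v = r ∧ B v = r) ∨
      (A v ≠ r ∧ B v ≠ r ∧ A v ≠ B v ∧ s(A v, B v) ∈ G))
    (φ : Pt → Prop) :
    ∃ d : Pt → Pt, (∀ v, d v = if φ v then A v else B v) ∧ IsPST S (edg S r d) ∧
      ReachesIn (SimRotation S) 3 E (edg S r d) ∧ ReachesIn (SimRotation S) 3 (edg S r d) E := by
  obtain ⟨p, ρ, hpE, hpS, hpe, hρ⟩ := exists_par hr hE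
  subst hpE
  have hp : Par S r G p := ⟨hpS, fun v a b => hEG (hpe v a b), ρ, fun v a b => by
    have := hρ v a b; omega⟩
  -- bad vertices
  let bad : Pt → Prop := fun v => v ∈ S ∧ v ≠ r ∧ A v ≠ r ∧ p (A v) = v ∧ p (B v) = v
  let x : Pt → Pt := fun v => if A (A v) = B v ∨ B (A v) = B v then A v else B v
  let y : Pt → Pt := fun v => if A (A v) = B v ∨ B (A v) = B v then B v else A v
  have hbad : ∀ v, bad v → x v ∈ S ∧ x v ≠ r ∧ y v ∈ S ∧ y v ≠ r ∧ x v ≠ y v ∧ s(x v, y v) ∈ G ∧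
      p (x v) = v ∧ p (y v) = v ∧ (x v = A v ∨ x v = B v) ∧ A (y v) ≠ x v ∧ B (y v) ≠ x v := by
    rintro v ⟨hv, hvr, hAr, pA, pB⟩
    have h1 := hA v hv hvr
    have h2 := hB v hv hvr
    rcases hAB v hv hvr with h | ⟨_, hBr, hne, hg⟩
    · exact absurd h.1 hAr
    have a1 := (hA _ h1.1 hAr).2.2
    have a2 := (hB _ h1.1 hAr).2.2
    have a3 := (hA _ h2.1 hBr).2.2
    have a4 := (hB _ h2.1 hBr).2.2
    by_cases hc : A (A v) = B v ∨ B (A v) = B v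
    · simp only [x, y, if_pos hc]
      refine ⟨h1.1, hAr, h2.1, hBr, hne, hg, pA, pB, Or.inl trivial, ?_, ?_⟩
      · intro h; rw [h] at a3; rcases hc with hc | hc
        · rw [hc] at a1; omega
        · rw [hc] at a2; omega
      · intro h; rw [h] at a4; rcases hc with hc | hc
        · rw [hc] at a1; omega
        · rw [hc] at a2; omega
    · simp only [x, y, if_neg hc]
      push Not at hc
      refine ⟨h2.1, hBr, h1.1, hAr, hne.symm, ?_, pB, pA, Or.inr trivial, hc.1, hc.2⟩
      rw [Sym2.eq_swap]; exact hg
  let mv : Pt → Prop := fun u => bad (p u) ∧ u = x (p u)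
  let p3 : Pt → Pt := fun u => if mv u then y (p u) else p u
  have hp3 : Par S r G p3 := by
    refine ⟨?_, ?_, fun u => 2 * ρ u + if mv u then 1 else 0, ?_⟩
    · intro v hv hvr
      by_cases hm : mv v
      · simp only [p3, if_pos hm]; exact (hbad _ hm.1).2.2.1
      · simp only [p3, if_neg hm]; exact hpS v hv hvr
    · intro v hv hvr
      by_cases hm : mv v
      · simp only [p3, if_pos hm]
        have := (hbad _ hm.1).2.2.2.2.2.1
        rwa [← hm.2] at this
      · simp only [p3, if_neg hm]; exact hp.edge v hv hvr
    · intro v hv hvr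
      have e1 := hρ v hv hvr
      by_cases hm : mv v
      · obtain ⟨b1, b2, b3, b4, b5, b6, b7, b8, b9⟩ := hbad _ hm.1
        have hy : ¬ mv (y (p v)) := by
          rintro ⟨_, h⟩
          rw [b8] at h; exact b5 h.symm
        have e2 := hρ _ b3 b4
        rw [b8] at e2
        simp only [p3, if_pos hm, if_neg hy]; omega
      · simp only [p3, if_neg hm]
        split_ifs <;> omega
  have s1 : ∀ v ∈ S, v ≠ r → ∀ w ∈ S, w ≠ r → p3 v = w → p w = v → False := by
    intro v hv hvr w hw hwr h1 h2
    have e1 := hρ v hv hvr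
    have e2 := hρ w hw hwr
    by_cases hm : mv v
    · simp only [p3, if_pos hm] at h1
      have := (hbad _ hm.1).2.2.2.2.2.2.2.1
      rw [h1, h2] at this
      rw [← this] at e1; omega
    · simp only [p3, if_neg hm] at h1
      rw [h1] at e1; rw [h2] at e2; omega
  let D : Pt → Pt := fun v => if bad v then x v else if p (A v) = v then B v else A v
  have hD : ∀ v, D v = A v ∨ D v = B v := by
    intro v
    simp only [D]
    split_ifs with h1 h2
    · exact (hbad v h1).2.2.2.2.2.2.2.2.1
    · exact Or.inr rfl
    · exact Or.inl rfl
  have optPar : ∀ d : Pt → Pt, (∀ v, d v = A v ∨ d v = B v) → Par S r G d := by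
    intro d hd
    refine ⟨?_, ?_, σ, ?_⟩ <;> intro v hv hvr <;> rcases hd v with h | h <;> rw [h]
    · exact (hA v hv hvr).1
    · exact (hB v hv hvr).1
    · exact (hA v hv hvr).2.1
    · exact (hB v hv hvr).2.1
    · exact (hA v hv hvr).2.2
    · exact (hB v hv hvr).2.2
  have s2 : ∀ v ∈ S, v ≠ r → ∀ w ∈ S, w ≠ r → D v = w → p3 w = v → False := by
    intro v hv hvr w hw hwr h1 h2
    by_cases hm : mv w
    · simp only [p3, if_pos hm] at h2
      obtain ⟨b1, b2, b3, b4, b5, b6, b7, b8, b9, b10, b11⟩ := hbad _ hm.1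
      rw [h2, ← hm.2] at b10 b11
      rcases hD v with h | h
      · exact b10 (h ▸ h1)
      · exact b11 (h ▸ h1)
    · simp only [p3, if_neg hm] at h2
      by_cases hb : bad v
      · simp only [D, if_pos hb] at h1
        apply hm
        refine ⟨h2 ▸ hb, ?_⟩
        rw [h2, h1]
      · simp only [D, if_neg hb] at h1
        by_cases hc : p (A v) = v
        · rw [if_pos hc] at h1
          apply hb
          refine ⟨hv, hvr, ?_, hc, ?_⟩
          · rcases hAB v hv hvr with h | h
            · rw [h.2] at h1; exact absurd h1.symm hwr
            · exact h.1
          · rw [h1, h2]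
        · rw [if_neg hc] at h1
          rw [h1] at hc; exact hc h2
  let d : Pt → Pt := fun v => if φ v then A v else B v
  have hd : ∀ v, d v = A v ∨ d v = B v := by
    intro v; simp only [d]; split_ifs <;> simp
  have hDp := optPar D hD
  have hdp := optPar d hd
  have dec : ∀ e : Pt → Pt, (∀ v, e v = A v ∨ e v = B v) → ∀ v ∈ S, v ≠ r → σ (e v) < σ v := by
    intro e he v hv hvr
    rcases he v with h | h <;> rw [h]
    · exact (hA v hv hvr).2.2
    · exact (hB v hv hvr).2.2
  have s3 : ∀ v ∈ S, v ≠ r → ∀ w ∈ S, w ≠ r → d v = w → D w = v → False := by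
    intro v hv hvr w hw hwr h1 h2
    have e1 := dec d hd v hv hvr
    have e2 := dec D hD w hw hwr
    rw [h1] at e1; rw [h2] at e2; omega
  have flip : ∀ {q1 q2 : Pt → Pt},
      (∀ v ∈ S, v ≠ r → ∀ w ∈ S, w ≠ r → q2 v = w → q1 w = v → False) →
      (∀ v ∈ S, v ≠ r → ∀ w ∈ S, w ≠ r → q1 v = w → q2 w = v → False) :=
    fun h v hv hvr w hw hwr h1 h2 => h w hw hwr v hv hvr h2 h1
  refine ⟨d, fun v => rfl, hdp.isPST hr hG, ?_, ?_⟩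
  · exact reaches_trans (reaches_trans (reaches_one (hp.rot hr hG hp3 s1))
      (reaches_one (hp3.rot hr hG hDp s2))) (reaches_one (hDp.rot hr hG hdp s3))
  · exact reaches_trans (reaches_trans (reaches_one (hdp.rot hr hG hDp (flip s3)))
      (reaches_one (hDp.rot hr hG hp3 (flip s2)))) (reaches_one (hp3.rot hr hG hp (flip s1)))

/-- rank function from elimination property -/
lemma acyc_of_elim {α : Type*} (R : α → α → Prop) (V : Finset α)
    (hirr : ∀ v ∈ V, ¬ R v v)
    (hel : ∀ U : Finset α, U ⊆ V → U.Nonempty → ∃ m ∈ U, ∀ x ∈ U, ∀ y ∈ U, R x m → R m y → R x y) :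
    ∀ v, ¬ Relation.TransGen (fun a b => a ∈ V ∧ b ∈ V ∧ R a b) v v := by
  have key : ∀ n : ℕ, ∀ U : Finset α, U ⊆ V → U.card = n →
      ∀ v, ¬ Relation.TransGen (fun a b => a ∈ U ∧ b ∈ U ∧ R a b) v v := by
    intro n
    induction n with
    | zero =>
      intro U _ hc v hv
      rw [Finset.card_eq_zero] at hc
      subst hc
      obtain ⟨w, hw, _⟩ := Relation.TransGen.head'_iff.1 hv
      simp at hw
    | succ n ih =>
      intro U hUV hc v hv
      have hne : U.Nonempty := Finset.card_pos.1 (by omega)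
      obtain ⟨m, hm, hmx⟩ := hel U hUV hne
      have ih' := ih (U.erase m) ((Finset.erase_subset _ _).trans hUV)
        (by rw [Finset.card_erase_of_mem hm]; omega)
      have hmm : ¬ R m m := hirr m (hUV hm)
      -- paths starting away from m
      have conv : ∀ a b, Relation.TransGen (fun a b => a ∈ U ∧ b ∈ U ∧ R a b) a b → a ≠ m →
          (b ≠ m → Relation.TransGen (fun a b => a ∈ U.erase m ∧ b ∈ U.erase m ∧ R a b) a b) ∧
          (b = m → ∃ c, c ≠ m ∧ c ∈ U ∧ R c m ∧ (a = c ∨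
            Relation.TransGen (fun a b => a ∈ U.erase m ∧ b ∈ U.erase m ∧ R a b) a c)) := by
        intro a b hab ham
        induction hab with
        | single h =>
          refine ⟨fun hb => Relation.TransGen.single ⟨?_, ?_, h.2.2⟩, fun hb => ?_⟩
          · exact Finset.mem_erase.2 ⟨ham, h.1⟩
          · exact Finset.mem_erase.2 ⟨hb, h.2.1⟩
          · subst hb; exact ⟨a, ham, h.1, h.2.2, Or.inl rfl⟩
        | @tail b c hab h ih2 =>
          by_cases hb : b = m
          · subst hb
            obtain ⟨c', c1, c2, c3, c4⟩ := ih2.2 rfl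
            refine ⟨fun hcm => ?_, fun hcm => ?_⟩
            · have hR := hmx c' c2 c h.2.1 c3 h.2.2
              have st : c' ∈ U.erase b ∧ c ∈ U.erase b ∧ R c' c :=
                ⟨Finset.mem_erase.2 ⟨c1, c2⟩, Finset.mem_erase.2 ⟨hcm, h.2.1⟩, hR⟩
              rcases c4 with rfl | c4
              · exact Relation.TransGen.single st
              · exact c4.tail st
            · subst hcm; exact absurd h.2.2 hmm
          · have t := ih2.1 hb
            refine ⟨fun hcm => t.tail ⟨Finset.mem_erase.2 ⟨hb, h.1⟩,
              Finset.mem_erase.2 ⟨hcm, h.2.1⟩, h.2.2⟩, fun hcm => ?_⟩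
            subst hcm
            exact ⟨b, hb, h.1, h.2.2, Or.inr t⟩
      by_cases hvm : v = m
      · subst hvm
        obtain ⟨w, hw, hwv⟩ := Relation.TransGen.head'_iff.1 hv
        have hwm : w ≠ v := by rintro rfl; exact hmm hw.2.2
        rcases Relation.reflTransGen_iff_eq_or_transGen.1 hwv with h | h
        · exact hwm h.symm
        · obtain ⟨c, c1, c2, c3, c4⟩ := (conv w v h hwm).2 rfl
          have hR := hmx c c2 w hw.2.1 c3 hw.2.2
          have st : c ∈ U.erase v ∧ w ∈ U.erase v ∧ R c w :=
            ⟨Finset.mem_erase.2 ⟨c1, c2⟩, Finset.mem_erase.2 ⟨hwm, hw.2.1⟩, hR⟩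
          rcases c4 with rfl | c4
          · exact ih' _ (Relation.TransGen.single st)
          · exact ih' _ (c4.tail st)
      · exact ih' v ((conv v v hv hvm).1 hvm)
  exact key _ V subset_rfl rfl

lemma rank_of_acyc {α : Type*} (Q : α → α → Prop) (V : Finset α)
    (hac : ∀ v, ¬ Relation.TransGen (fun a b => a ∈ V ∧ b ∈ V ∧ Q a b) v v) :
    ∃ σ : α → ℕ, ∀ a ∈ V, ∀ b ∈ V, Q a b → σ b < σ a := by
  let T := Relation.TransGen (fun a b => a ∈ V ∧ b ∈ V ∧ Q a b)
  refine ⟨fun v => (V.filter (fun w => T v w)).card, ?_⟩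
  intro a ha b hb hab
  apply Finset.card_lt_card
  rw [Finset.ssubset_iff_of_subset]
  · refine ⟨b, ?_, ?_⟩
    · simp only [Finset.mem_filter]; exact ⟨hb, Relation.TransGen.single ⟨ha, hb, hab⟩⟩
    · simp only [Finset.mem_filter]; exact fun h => hac b h.2
  · intro w hw
    simp only [Finset.mem_filter] at hw ⊢
    exact ⟨hw.1, Relation.TransGen.head ⟨ha, hb, hab⟩ hw.2⟩


lemma affine_sign {A B A' B' s t : ℝ} (hs : A + B * s < A' + B' * s)
    (ht : A' + B' * t ≤ A + B * t) :
    ∃ u, A + B * u = A' + B' * u ∧ min s t ≤ u ∧ u ≤ max s t := by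
  set D := (A' - A) + (B' - B) * s with hD
  set D' := (A - A') + (B - B') * t with hD'
  have h1 : 0 < D := by rw [hD]; linarith
  have h2 : 0 ≤ D' := by rw [hD']; linarith
  have h3 : D + D' ≠ 0 := by positivity
  refine ⟨(D' * s + D * t) / (D + D'), ?_, ?_, ?_⟩
  · field_simp
    rw [hD, hD']; ring
  · rw [le_div_iff₀ (by positivity)]
    nlinarith [min_le_left s t, min_le_right s t]
  · rw [div_le_iff₀ (by positivity)]
    nlinarith [le_max_left s t, le_max_right s t]

/-- Depth order of noncrossing segments is acyclic. -/
lemma depth_rank {α : Type*} (V : Finset α) (ξ η : α → ℝ) (a b : α → α) (A B : α → ℝ)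
    (h1 : ∀ v ∈ V, ξ (a v) < ξ v) (h2 : ∀ v ∈ V, ξ v < ξ (b v))
    (hA : ∀ v ∈ V, A v + B v * ξ (a v) = η (a v))
    (hB : ∀ v ∈ V, A v + B v * ξ (b v) = η (b v))
    (hlow : ∀ v ∈ V, η v < A v + B v * ξ v)
    (hnc : ∀ v ∈ V, ∀ w ∈ V, ∀ s, ξ (a v) < s → s < ξ (b v) → ξ (a w) < s → s < ξ (b w) →
      A v + B v * s = A w + B w * s → A v = A w ∧ B v = B w) :
    ∃ σ : α → ℕ, ∀ v ∈ V, (a v ∈ V → σ (a v) < σ v) ∧ (b v ∈ V → σ (b v) < σ v) := by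
  let R : α → α → Prop := fun v w => ∃ s, ξ (a v) < s ∧ s < ξ (b v) ∧ ξ (a w) < s ∧ s < ξ (b w) ∧
    A v + B v * s < A w + B w * s
  have cons : ∀ v ∈ V, ∀ w ∈ V, R v w → ∀ t, ξ (a v) < t → t < ξ (b v) → ξ (a w) < t →
      t < ξ (b w) → A v + B v * t < A w + B w * t := by
    rintro v hv w hw ⟨s, s1, s2, s3, s4, s5⟩ t t1 t2 t3 t4
    by_contra hcon
    push Not at hcon
    obtain ⟨u, u1, u2, u3⟩ := affine_sign s5 hcon
    have := hnc v hv w hw u (lt_of_lt_of_le (lt_min s1 t1) u2) (lt_of_le_of_lt u3 (max_lt s2 t2))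
      (lt_of_lt_of_le (lt_min s3 t3) u2) (lt_of_le_of_lt u3 (max_lt s4 t4)) u1
    rw [this.1, this.2] at s5
    exact lt_irrefl _ s5
  have hac := acyc_of_elim R V (by rintro v hv ⟨s, s1, s2, s3, s4, s5⟩; exact lt_irrefl _ s5) (by
    intro U hU hne
    obtain ⟨m, hm, hmin⟩ := Finset.exists_min_image U (fun v => ξ (b v)) hne
    refine ⟨m, hm, fun x hx y hy hxm hmy => ?_⟩
    have c1 := cons x (hU hx) m (hU hm) hxm
    have c2 := cons m (hU hm) y (hU hy) hmy
    obtain ⟨s, s1, s2, s3, s4, s5⟩ := hxm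
    obtain ⟨t, t1, t2, t3, t4, t5⟩ := hmy
    have ex := hmin x hx
    have ey := hmin y hy
    obtain ⟨u, u1, u2⟩ := exists_between (show max s t < ξ (b m) from max_lt s4 t2)
    have us := lt_of_le_of_lt (le_max_left s t) u1
    have ut := lt_of_le_of_lt (le_max_right s t) u1
    refine ⟨u, by linarith, by linarith, by linarith, by linarith, ?_⟩
    exact (c1 u (by linarith) (by linarith) (by linarith) (by linarith)).trans
      (c2 u (by linarith) (by linarith) (by linarith) (by linarith)))
  obtain ⟨σ, hσ⟩ := rank_of_acyc R V hac
  refine ⟨σ, fun v hv => ⟨fun hw => hσ v hv _ hw ?_, fun hw => hσ v hv _ hw ?_⟩⟩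
  · have e : ∀ᶠ s in nhds (ξ (a v)), s < ξ (b v) ∧ s < ξ (b (a v)) ∧
        A v + B v * s < A (a v) + B (a v) * s := by
      refine (eventually_lt_nhds ((h1 v hv).trans (h2 v hv))).and
        ((eventually_lt_nhds (h2 _ hw)).and ?_)
      apply ContinuousAt.eventually_lt (by fun_prop) (by fun_prop)
      rw [hA v hv]; exact hlow _ hw
    obtain ⟨s, hs, hs'⟩ := ((e.filter_mono nhdsWithin_le_nhds).and
      (self_mem_nhdsWithin : Set.Ioi (ξ (a v)) ∈ nhdsWithin (ξ (a v)) (Set.Ioi (ξ (a v))))).exists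
    exact ⟨s, hs', hs.1, (h1 _ hw).trans hs', hs.2.1, hs.2.2⟩
  · have e : ∀ᶠ s in nhds (ξ (b v)), ξ (a v) < s ∧ ξ (a (b v)) < s ∧
        A v + B v * s < A (b v) + B (b v) * s := by
      refine (eventually_gt_nhds ((h1 v hv).trans (h2 v hv))).and
        ((eventually_gt_nhds (h1 _ hw)).and ?_)
      apply ContinuousAt.eventually_lt (by fun_prop) (by fun_prop)
      rw [hB v hv]; exact hlow _ hw
    obtain ⟨s, hs, hs'⟩ := ((e.filter_mono nhdsWithin_le_nhds).and
      (self_mem_nhdsWithin : Set.Iio (ξ (b v)) ∈ nhdsWithin (ξ (b v)) (Set.Iio (ξ (b v))))).exists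
    have hs' : s < ξ (b v) := hs'
    exact ⟨s, hs.1, hs', hs.2.1, hs'.trans (h2 _ hw), hs.2.2⟩


def ori (p q x : Pt) : ℝ := (q.1 - p.1) * (x.2 - p.2) - (q.2 - p.2) * (x.1 - p.1)

lemma ori_ne {S : Finset Pt} (hS : GenPos S) {p q x : Pt} (hp : p ∈ S) (hq : q ∈ S) (hx : x ∈ S)
    (h1 : p ≠ q) (h2 : p ≠ x) (h3 : q ≠ x) : ori p q x ≠ 0 := by
  intro h0
  refine hS p hp q hq x hx h1 h2 h3 ?_
  rw [collinear_iff_of_mem (p₀ := p) (by simp)]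
  refine ⟨q - p, ?_⟩
  have hd : (q.1 - p.1) ^ 2 + (q.2 - p.2) ^ 2 ≠ 0 := by
    intro h
    have e1 : q.1 - p.1 = 0 := by nlinarith [sq_nonneg (q.1 - p.1), sq_nonneg (q.2 - p.2)]
    have e2 : q.2 - p.2 = 0 := by nlinarith [sq_nonneg (q.1 - p.1), sq_nonneg (q.2 - p.2)]
    exact h1 (Prod.ext (by linarith) (by linarith))
  intro y hy
  simp only [Set.mem_insert_iff, Set.mem_singleton_iff] at hy
  rcases hy with rfl | rfl | rfl
  · exact ⟨0, by simp⟩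
  · exact ⟨1, by simp⟩
  · refine ⟨((q.1 - p.1) * (y.1 - p.1) + (q.2 - p.2) * (y.2 - p.2)) /
      ((q.1 - p.1) ^ 2 + (q.2 - p.2) ^ 2), ?_⟩
    unfold ori at h0
    ext
    · simp only [vadd_eq_add, Prod.fst_add, Prod.smul_fst, Prod.fst_sub, smul_eq_mul]
      field_simp
      linear_combination (-(q.2 - p.2)) * h0
    · simp only [vadd_eq_add, Prod.snd_add, Prod.smul_snd, Prod.snd_sub, smul_eq_mul]
      field_simp
      linear_combination (q.1 - p.1) * h0

lemma ori_eq {S : Finset Pt} (hS : GenPos S) {p q x : Pt} (hp : p ∈ S) (hq : q ∈ S) (hx : x ∈ S)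
    (h1 : p ≠ q) (h : ori p q x = 0) : x = p ∨ x = q := by
  by_contra hc
  push Not at hc
  exact ori_ne hS hp hq hx h1 hc.1.symm hc.2.symm h

/-- point on the line -/
def lnp (p q : Pt) (t : ℝ) : Pt := (p.1 + t * (q.1 - p.1), p.2 + t * (q.2 - p.2))

lemma mem_seg {p q Y : Pt} : Y ∈ segOf s(p, q) ↔ ∃ t, 0 ≤ t ∧ t ≤ 1 ∧ Y = lnp p q t := by
  change Y ∈ segment ℝ p q ↔ _
  rw [segment_eq_image]
  constructor
  · rintro ⟨t, ⟨h0, h1⟩, rfl⟩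
    refine ⟨t, h0, h1, ?_⟩
    unfold lnp
    ext <;> simp <;> ring
  · rintro ⟨t, h0, h1, rfl⟩
    refine ⟨t, ⟨h0, h1⟩, ?_⟩
    unfold lnp
    ext <;> simp <;> ring

lemma lnp_zero (p q : Pt) : lnp p q 0 = p := by unfold lnp; ext <;> simp
lemma lnp_one (p q : Pt) : lnp p q 1 = q := by unfold lnp; ext <;> simp

lemma left_mem_segOf (p q : Pt) : p ∈ segOf s(p, q) := mem_seg.2 ⟨0, le_rfl, zero_le_one, (lnp_zero p q).symm⟩
lemma right_mem_segOf (p q : Pt) : q ∈ segOf s(p, q) := mem_seg.2 ⟨1, zero_le_one, le_rfl, (lnp_one p q).symm⟩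

lemma ori_lnp (p q x y : Pt) (t : ℝ) : ori p q (lnp x y t) = ori p q x + t * (ori p q y - ori p q x) := by
  unfold ori lnp; ring

lemma ori_lnp_self (p q : Pt) (t : ℝ) : ori p q (lnp p q t) = 0 := by
  unfold ori lnp; ring

lemma mem_seg_open {S : Finset Pt} {p q Y : Pt} (hp : p ∈ S) (hq : q ∈ S) (hY : Y ∉ S)
    (h : Y ∈ segOf s(p, q)) : ∃ t, 0 < t ∧ t < 1 ∧ Y = lnp p q t := by
  obtain ⟨t, h0, h1, rfl⟩ := mem_seg.1 h
  refine ⟨t, lt_of_le_of_ne h0 ?_, lt_of_le_of_ne h1 ?_, rfl⟩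
  · rintro rfl; rw [lnp_zero] at hY; exact hY hp
  · rintro rfl; rw [lnp_one] at hY; exact hY hq

lemma mem_seg_S {S : Finset Pt} (hS : GenPos S) {p q Y : Pt} (hp : p ∈ S) (hq : q ∈ S) (hpq : p ≠ q)
    (hY : Y ∈ S) (h : Y ∈ segOf s(p, q)) : Y = p ∨ Y = q := by
  obtain ⟨t, h0, h1, rfl⟩ := mem_seg.1 h
  exact ori_eq hS hp hq hY hpq (ori_lnp_self p q t)

/-- edge of the complete graph on S -/
def InS (S : Finset Pt) (e : Sym2 Pt) : Prop := ¬ e.IsDiag ∧ ∀ p ∈ e, p ∈ S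

lemma inS_mk {S : Finset Pt} {p q : Pt} : InS S s(p, q) ↔ p ≠ q ∧ p ∈ S ∧ q ∈ S := by
  simp [InS]

lemma mem_segOf_S {S : Finset Pt} (hS : GenPos S) {e : Sym2 Pt} (he : InS S e) {Y : Pt}
    (hY : Y ∈ S) (h : Y ∈ segOf e) : Y ∈ e := by
  induction e using Sym2.ind with
  | _ p q =>
    obtain ⟨h1, h2, h3⟩ := inS_mk.1 he
    exact Sym2.mem_iff.2 (mem_seg_S hS h2 h3 h1 hY h)

lemma nocross_of {S : Finset Pt} (hS : GenPos S) {e f : Sym2 Pt} (he : InS S e) (hf : InS S f)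
    (h : ∀ Y, Y ∈ segOf e → Y ∈ segOf f → Y ∈ S) : NoCrossPair e f := by
  rintro Y ⟨h1, h2⟩
  have := h Y h1 h2
  exact ⟨mem_segOf_S hS he this h1, mem_segOf_S hS hf this h2⟩

lemma mem_of_nocross {S : Finset Pt} {G : Finset (Sym2 Pt)} (hG : NoCross G)
    (hGS : ∀ g ∈ G, InS S g) {e f : Sym2 Pt} (he : e ∈ G) (hf : f ∈ G) (hne : e ≠ f) {Y : Pt}
    (h1 : Y ∈ segOf e) (h2 : Y ∈ segOf f) : Y ∈ S :=
  (hGS e he).2 Y (hG e he f hf hne ⟨h1, h2⟩).1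

/-- affine coordinates w.r.t. v, X, p -/
def bet (v X p y : Pt) : ℝ := ori v y p / ori v X p
def gam (v X p y : Pt) : ℝ := ori v X y / ori v X p
def sig (v X p a y : Pt) : ℝ := bet v X p y * gam v X p a - gam v X p y * bet v X p a

lemma bet_lnp (v X p x y : Pt) (t : ℝ) :
    bet v X p (lnp x y t) = bet v X p x + t * (bet v X p y - bet v X p x) := by
  unfold bet ori lnp; ring
lemma gam_lnp (v X p x y : Pt) (t : ℝ) :
    gam v X p (lnp x y t) = gam v X p x + t * (gam v X p y - gam v X p x) := by
  unfold gam ori lnp; ring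
lemma sig_lnp (v X p a x y : Pt) (t : ℝ) :
    sig v X p a (lnp x y t) = sig v X p a x + t * (sig v X p a y - sig v X p a x) := by
  unfold sig; rw [bet_lnp, gam_lnp]; ring

lemma rec1 {v X p : Pt} (h : ori v X p ≠ 0) (y : Pt) :
    y.1 = v.1 + bet v X p y * (X.1 - v.1) + gam v X p y * (p.1 - v.1) := by
  unfold bet gam; field_simp; unfold ori; ring
lemma rec2 {v X p : Pt} (h : ori v X p ≠ 0) (y : Pt) :
    y.2 = v.2 + bet v X p y * (X.2 - v.2) + gam v X p y * (p.2 - v.2) := by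
  unfold bet gam; field_simp; unfold ori; ring

lemma sig_ori {v X p : Pt} (h : ori v X p ≠ 0) (a y : Pt) :
    sig v X p a y * ori v X p = - ori v a y := by
  unfold sig bet gam; field_simp; unfold ori; ring

lemma bet_v (v X p : Pt) : bet v X p v = 0 := by unfold bet ori; simp
lemma gam_v (v X p : Pt) : gam v X p v = 0 := by unfold gam ori; simp
lemma bet_p (v X p : Pt) : bet v X p p = 0 := by
  unfold bet; rw [div_eq_zero_iff]; left; unfold ori; ring
lemma gam_p {v X p : Pt} (h : ori v X p ≠ 0) : gam v X p p = 1 := by unfold gam; exact div_self h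
lemma bet_X {v X p : Pt} (h : ori v X p ≠ 0) : bet v X p X = 1 := by unfold bet; exact div_self h
lemma gam_X (v X p : Pt) : gam v X p X = 0 := by
  unfold gam; rw [div_eq_zero_iff]; left; unfold ori; ring
lemma sig_a (v X p a : Pt) : sig v X p a a = 0 := by unfold sig; ring
lemma sig_v (v X p a : Pt) : sig v X p a v = 0 := by unfold sig; rw [bet_v, gam_v]; ring

lemma first_exit {g0 g1 u0 u1 : ℝ} (hg : 0 ≤ g0) (hu : 0 ≤ u0) (h : g1 < 0 ∨ u1 < 0) :
    ∃ t, 0 ≤ t ∧ t ≤ 1 ∧ ((g0 + t * (g1 - g0) = 0 ∧ 0 ≤ u0 + t * (u1 - u0)) ∨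
      (u0 + t * (u1 - u0) = 0 ∧ 0 ≤ g0 + t * (g1 - g0))) := by
  have key : ∀ {g0 g1 : ℝ}, 0 ≤ g0 → g1 < 0 → 0 ≤ g0 / (g0 - g1) ∧ g0 / (g0 - g1) ≤ 1 ∧
      g0 + g0 / (g0 - g1) * (g1 - g0) = 0 := by
    intro g0 g1 h0 h1
    have : 0 < g0 - g1 := by linarith
    refine ⟨by positivity, by rw [div_le_one this]; linarith, ?_⟩
    field_simp; ring
  have mono : ∀ {u0 u1 s t : ℝ}, u0 + t * (u1 - u0) = 0 → u1 < 0 → s ≤ t → 0 ≤ u0 →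
      0 ≤ u0 + s * (u1 - u0) := by
    intro u0 u1 s t h1 h2 h3 h4
    nlinarith
  rcases lt_or_ge g1 0 with a | a <;> rcases lt_or_ge u1 0 with b | b
  · obtain ⟨c1, c2, c3⟩ := key hg a
    obtain ⟨d1, d2, d3⟩ := key hu b
    rcases le_total (g0 / (g0 - g1)) (u0 / (u0 - u1)) with e | e
    · exact ⟨_, c1, c2, Or.inl ⟨c3, mono d3 b e hu⟩⟩
    · exact ⟨_, d1, d2, Or.inr ⟨d3, mono c3 a e hg⟩⟩
  · obtain ⟨c1, c2, c3⟩ := key hg a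
    exact ⟨_, c1, c2, Or.inl ⟨c3, by nlinarith⟩⟩
  · obtain ⟨d1, d2, d3⟩ := key hu b
    exact ⟨_, d1, d2, Or.inr ⟨d3, by nlinarith⟩⟩
  · exact absurd h (by push Not; exact ⟨a, b⟩)


structure Ctx (S : Finset Pt) (G : Finset (Sym2 Pt)) (r v X : Pt) (f : Sym2 Pt) (τ : ℝ) : Prop where
  gp : GenPos S
  nc : NoCross G
  gs : ∀ g ∈ G, InS S g
  fG : f ∈ G
  XS : X ∉ S
  Xf : X ∈ segOf f
  clear : ∀ g ∈ G, ∀ t, 0 < t → t < 1 → lnp v X t ∉ segOf g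
  vS : v ∈ S
  rS : r ∈ S
  vr : v ≠ r
  t0 : 0 < τ
  t1 : τ < 1
  hX : X = lnp v r τ

structure Half (S : Finset Pt) (v X p a : Pt) : Prop where
  D : ori v X p ≠ 0
  aS : a ∈ S
  av : a ≠ v
  ga : 0 < gam v X p a
  ba : 0 ≤ bet v X p a
  ua : bet v X p a + gam v X p a ≤ 1
  mx : ∀ y ∈ S, 0 ≤ bet v X p y → 0 ≤ gam v X p y → bet v X p y + gam v X p y ≤ 1 →
    sig v X p a y ≤ 0

lemma lnp_lnp_mem {e e' Y : Pt} (hY : Y ∈ segOf s(e, e')) {t : ℝ} (h0 : 0 ≤ t) (h1 : t ≤ 1) :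
    lnp Y e t ∈ segOf s(e, e') := by
  obtain ⟨s, s0, s1, rfl⟩ := mem_seg.1 hY
  refine mem_seg.2 ⟨s * (1 - t), by nlinarith, by nlinarith, ?_⟩
  unfold lnp
  ext <;> simp <;> ring

lemma Ctx.exists_half {S : Finset Pt} {G : Finset (Sym2 Pt)} {r v X : Pt} {f : Sym2 Pt} {τ : ℝ}
    (h : Ctx S G r v X f τ) {p : Pt} (hp : p ∈ S) (hpv : p ≠ v) (D : ori v X p ≠ 0) :
    ∃ a, Half S v X p a := by
  set T := S.filter (fun y => y ≠ v ∧ 0 ≤ bet v X p y ∧ 0 ≤ gam v X p y ∧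
    bet v X p y + gam v X p y ≤ 1) with hT
  have hpT : p ∈ T := by
    rw [hT, Finset.mem_filter]
    refine ⟨hp, hpv, (bet_p v X p).ge, ?_, ?_⟩
    · rw [gam_p D]; exact zero_le_one
    · rw [gam_p D, bet_p]; norm_num
  have hpos : ∀ y ∈ T, 0 < gam v X p y := by
    intro y hy
    rw [hT, Finset.mem_filter] at hy
    obtain ⟨hyS, hyv, hb, hg, hu⟩ := hy
    refine lt_of_le_of_ne hg fun h0 => ?_
    have e1 := rec1 D y
    have e2 := rec2 D y
    rw [← h0] at e1 e2 hu
    have hX := h.hX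
    have x1 : X.1 = v.1 + τ * (r.1 - v.1) := by rw [hX]; rfl
    have x2 : X.2 = v.2 + τ * (r.2 - v.2) := by rw [hX]; rfl
    rw [x1] at e1; rw [x2] at e2
    have ho : ori v r y = 0 := by
      unfold ori
      linear_combination (r.1 - v.1) * e2 - (r.2 - v.2) * e1
    rcases ori_eq h.gp h.vS h.rS hyS h.vr ho with h' | h'
    · exact hyv h'
    · subst h'
      have : bet v X p y * τ < 1 := by nlinarith [h.t0, h.t1]
      have f1 : (1 - bet v X p y * τ) * (y.1 - v.1) = 0 := by linear_combination e1
      have f2 : (1 - bet v X p y * τ) * (y.2 - v.2) = 0 := by linear_combination e2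
      have k : 1 - bet v X p y * τ ≠ 0 := by linarith
      refine hyv (Prod.ext ?_ ?_)
      · have := (mul_eq_zero.1 f1).resolve_left k; linarith
      · have := (mul_eq_zero.1 f2).resolve_left k; linarith
  obtain ⟨a, haT, hmax⟩ := Finset.exists_max_image T (fun y => bet v X p y / gam v X p y) ⟨p, hpT⟩
  have ha := haT
  rw [hT, Finset.mem_filter] at ha
  obtain ⟨haS, hav, hb, hg, hu⟩ := ha
  refine ⟨a, D, haS, hav, hpos a haT, hb, hu, ?_⟩
  intro y hyS yb yg yu
  by_cases hyv : y = v
  · subst hyv; rw [sig_v]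
  · have hyT : y ∈ T := by rw [hT, Finset.mem_filter]; exact ⟨hyS, hyv, yb, yg, yu⟩
    have := hmax y hyT
    rw [div_le_div_iff₀ (hpos y hyT) (hpos a haT)] at this
    unfold sig; linarith

lemma Ctx.hgen {S : Finset Pt} {G : Finset (Sym2 Pt)} {r v X p q a : Pt} {τ : ℝ}
    (h : Ctx S G r v X s(p, q) τ) (H : Half S v X p a) {e e' Y : Pt} (hg : s(e, e') ∈ G)
    (hgf : s(e, e') ≠ s(p, q)) (hY : Y ∈ segOf s(e, e')) (hs : 0 ≤ sig v X p a Y)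
    (hγ : 0 ≤ gam v X p Y) (hu : bet v X p Y + gam v X p Y ≤ 1) (he : 0 < sig v X p a e)
    (h0 : sig v X p a Y = 0 → 0 < gam v X p Y ∧ bet v X p Y + gam v X p Y < 1) : False := by
  have heS : e ∈ S := (inS_mk.1 (h.gs _ hg)).2.1
  have bpos : ∀ y, 0 ≤ gam v X p y → 0 < sig v X p a y → 0 < bet v X p y := by
    intro y y1 y2
    unfold sig at y2
    have := mul_nonneg y1 H.ba
    by_contra hc
    push Not at hc
    have := mul_nonpos_of_nonpos_of_nonneg hc H.ga.le
    linarith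
  by_cases hc : gam v X p e < 0 ∨ 1 - bet v X p e - gam v X p e < 0
  · obtain ⟨t, t0, t1, ht⟩ := first_exit hγ (u0 := 1 - bet v X p Y - gam v X p Y) (by linarith) hc
    have hmem := lnp_lnp_mem hY t0 t1
    have hsig : 0 < sig v X p a (lnp Y e t) := by
      rw [sig_lnp]
      rcases eq_or_lt_of_le hs with h' | h'
      · have := h0 h'.symm
        have : t ≠ 0 := by
          rintro rfl
          rcases ht with h2 | h2 <;> linarith [h2.1, this.1, this.2]
        have : 0 < t := lt_of_le_of_ne t0 this.symm
        rw [← h']; simp; positivity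
      · rcases eq_or_lt_of_le t1 with rfl | t1
        · linarith
        · nlinarith [mul_nonneg t0 he.le, mul_pos (sub_pos.2 t1) h']
    rw [← gam_lnp] at ht
    have hue : 1 - bet v X p Y - gam v X p Y + t * (1 - bet v X p e - gam v X p e - (1 - bet v X p Y - gam v X p Y)) = 1 - bet v X p (lnp Y e t) - gam v X p (lnp Y e t) := by
      rw [gam_lnp, bet_lnp]; ring
    rw [hue] at ht
    generalize lnp Y e t = Z at hmem hsig ht
    rcases ht with ⟨g0, u0⟩ | ⟨u0, g0⟩
    · have hb := bpos Z g0.ge hsig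
      have hZ : Z = lnp v X (bet v X p Z) := by
        have e1 := rec1 H.D Z
        have e2 := rec2 H.D Z
        rw [g0] at e1 e2
        refine Prod.ext ?_ ?_
        · simp only [lnp]; linarith
        · simp only [lnp]; linarith
      rcases lt_or_eq_of_le (show bet v X p Z ≤ 1 by linarith) with hb1 | hb1
      · rw [hZ] at hmem
        exact h.clear _ hg _ hb hb1 hmem
      · rw [hb1, lnp_one] at hZ
        rw [hZ] at hmem
        exact h.XS (mem_of_nocross h.nc h.gs hg h.fG hgf hmem h.Xf)
    · have hb := bpos Z g0 hsig
      have hZ : Z = lnp X p (gam v X p Z) := by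
        have e1 := rec1 H.D Z
        have e2 := rec2 H.D Z
        have hbb : bet v X p Z = 1 - gam v X p Z := by linarith
        rw [hbb] at e1 e2
        refine Prod.ext ?_ ?_
        · simp only [lnp]; linarith
        · simp only [lnp]; linarith
      have hmf : Z ∈ segOf s(p, q) := by
        rw [hZ]; exact lnp_lnp_mem h.Xf g0 (by linarith)
      have hZS := mem_of_nocross h.nc h.gs hg h.fG hgf hmem hmf
      have := H.mx Z hZS hb.le g0 (by linarith)
      linarith
  · push Not at hc
    have hb := bpos e hc.1 he
    have := H.mx e heS hb.le hc.1 (by linarith)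
    linarith

/-- all points of f have β+γ=1 -/
lemma Ctx.f_sum {S : Finset Pt} {G : Finset (Sym2 Pt)} {r v X p q : Pt} {τ : ℝ}
    (h : Ctx S G r v X s(p, q) τ) (D : ori v X p ≠ 0) {Y : Pt} (hY : Y ∈ segOf s(p, q)) :
    bet v X p Y + gam v X p Y = 1 := by
  obtain ⟨-, hp, hq⟩ := inS_mk.1 (h.gs _ h.fG)
  obtain ⟨t, t0, t1, ht⟩ := mem_seg_open hp hq h.XS h.Xf
  obtain ⟨s, s0, s1, rfl⟩ := mem_seg.1 hY
  have a1 := bet_X D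
  have a2 := gam_X v X p
  have a3 : bet v X p X = bet v X p (lnp p q t) := by rw [← ht]
  have a4 : gam v X p X = gam v X p (lnp p q t) := by rw [← ht]
  rw [bet_lnp, bet_p] at a3
  rw [gam_lnp, gam_p D] at a4
  have : t * (bet v X p q + gam v X p q - 1) = 0 := by linarith
  have hq := (mul_eq_zero.1 this).resolve_left t0.ne'
  rw [bet_lnp, gam_lnp, bet_p, gam_p D]
  linear_combination s * hq

lemma Ctx.va_free {S : Finset Pt} {G : Finset (Sym2 Pt)} {r v X p q a : Pt} {τ : ℝ}
    (h : Ctx S G r v X s(p, q) τ) (H : Half S v X p a) {g : Sym2 Pt} (hg : g ∈ G)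
    (hga : g ≠ s(v, a)) {Y : Pt} (hYg : Y ∈ segOf g) (hY : Y ∈ segOf s(v, a)) : Y ∈ S := by
  by_contra hYS
  obtain ⟨s, s0, s1, hYe⟩ := mem_seg_open h.vS H.aS hYS hY
  have b1 : bet v X p Y = s * bet v X p a := by rw [hYe, bet_lnp, bet_v]; ring
  have g1 : gam v X p Y = s * gam v X p a := by rw [hYe, gam_lnp, gam_v]; ring
  have sg : sig v X p a Y = 0 := by rw [hYe, sig_lnp, sig_v, sig_a]; ring
  have gpos : 0 < gam v X p Y := by rw [g1]; exact mul_pos s0 H.ga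
  have hu : bet v X p Y + gam v X p Y < 1 := by rw [b1, g1]; nlinarith [H.ua]
  have hgf : g ≠ s(p, q) := by
    rintro rfl
    have := h.f_sum H.D hYg
    linarith
  induction g using Sym2.ind with
  | _ e e' =>
    have key : ¬ (0 < sig v X p a e) := fun he =>
      h.hgen H hg hgf hYg sg.ge gpos.le hu.le he (fun _ => ⟨gpos, hu⟩)
    have key' : ¬ (0 < sig v X p a e') := fun he => by
      rw [Sym2.eq_swap] at hg hgf hYg
      exact h.hgen H hg hgf hYg sg.ge gpos.le hu.le he (fun _ => ⟨gpos, hu⟩)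
    push Not at key key'
    obtain ⟨hne, heS, heS'⟩ := inS_mk.1 (h.gs _ hg)
    obtain ⟨t, t0, t1, ht⟩ := mem_seg_open heS heS' hYS hYg
    rw [ht, sig_lnp] at sg
    have z1 : sig v X p a e = 0 := by nlinarith
    have z2 : sig v X p a e' = 0 := by nlinarith
    have o1 : ori v a e = 0 := by have := sig_ori H.D a e; rw [z1] at this; linarith
    have o2 : ori v a e' = 0 := by have := sig_ori H.D a e'; rw [z2] at this; linarith
    rcases ori_eq h.gp h.vS H.aS heS H.av.symm o1 with rfl | rfl <;>
      rcases ori_eq h.gp h.vS H.aS heS' H.av.symm o2 with rfl | rfl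
    · exact hne rfl
    · exact hga rfl
    · exact hga Sym2.eq_swap
    · exact hne rfl

lemma Ctx.ab_half {S : Finset Pt} {G : Finset (Sym2 Pt)} {r v X p q a b : Pt} {τ : ℝ}
    (h : Ctx S G r v X s(p, q) τ) (H : Half S v X p a) (hbS : b ∈ S)
    (hub : bet v X p b + gam v X p b ≤ 1) (hsb : 0 < sig v X p a b)
    {g : Sym2 Pt} (hg : g ∈ G)
    (hgf : g ≠ s(p, q)) {Y : Pt} (hYg : Y ∈ segOf g) (hY : Y ∈ segOf s(a, b)) (hYS : Y ∉ S)
    (hγ : 0 ≤ gam v X p Y) : False := by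
  obtain ⟨s, s0, s1, hYe⟩ := mem_seg_open H.aS hbS hYS hY
  have sg : 0 < sig v X p a Y := by
    rw [hYe, sig_lnp, sig_a]; nlinarith
  have hu : bet v X p Y + gam v X p Y ≤ 1 := by
    rw [hYe, bet_lnp, gam_lnp]; nlinarith [H.ua]
  induction g using Sym2.ind with
  | _ e e' =>
    obtain ⟨hne, heS, heS'⟩ := inS_mk.1 (h.gs _ hg)
    obtain ⟨t, t0, t1, ht⟩ := mem_seg_open heS heS' hYS hYg
    have key : ¬ (0 < sig v X p a e) := fun he =>
      h.hgen H hg hgf hYg sg.le hγ hu he (fun h0 => absurd h0 sg.ne')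
    have key' : ¬ (0 < sig v X p a e') := fun he => by
      rw [Sym2.eq_swap] at hg hgf hYg
      exact h.hgen H hg hgf hYg sg.le hγ hu he (fun h0 => absurd h0 sg.ne')
    push Not at key key'
    rw [ht, sig_lnp] at sg
    nlinarith


lemma ori_swap (r x y : Pt) : ori r x y = - ori r y x := by unfold ori; ring
lemma ori_swap' (r x y : Pt) : ori r x y = - ori x r y := by unfold ori; ring

lemma half_ord1 {r v X p : Pt} {τ : ℝ} (hX : X = lnp v r τ) (D : ori v X p ≠ 0) (a : Pt) :
    ori r v a = gam v X p a * ori r v p := by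
  have e1 := rec1 D a
  have e2 := rec2 D a
  have x1 : X.1 = v.1 + τ * (r.1 - v.1) := by rw [hX]; rfl
  have x2 : X.2 = v.2 + τ * (r.2 - v.2) := by rw [hX]; rfl
  generalize bet v X p a = β at *
  generalize gam v X p a = γ at *
  rw [x1] at e1; rw [x2] at e2
  unfold ori
  linear_combination (v.1 - r.1) * e2 - (v.2 - r.2) * e1

lemma half_ord2 {r v X p : Pt} {τ : ℝ} (hX : X = lnp v r τ) (D : ori v X p ≠ 0) (a : Pt) :
    ori r p a = (1 - bet v X p a - gam v X p a + bet v X p a * (1 - τ)) * ori r p v := by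
  have e1 := rec1 D a
  have e2 := rec2 D a
  have x1 : X.1 = v.1 + τ * (r.1 - v.1) := by rw [hX]; rfl
  have x2 : X.2 = v.2 + τ * (r.2 - v.2) := by rw [hX]; rfl
  generalize bet v X p a = β at *
  generalize gam v X p a = γ at *
  rw [x1] at e1; rw [x2] at e2
  unfold ori
  linear_combination (p.1 - r.1) * e2 - (p.2 - r.2) * e1

lemma sum_eq {v X p q : Pt} {t : ℝ} (hX : X = lnp p q t) (D : ori v X p ≠ 0) (D' : ori v X q ≠ 0)
    (y : Pt) : bet v X p y + gam v X p y = bet v X q y + gam v X q y := by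
  unfold bet gam
  field_simp
  have x1 : X.1 = p.1 + t * (q.1 - p.1) := by rw [hX]; rfl
  have x2 : X.2 = p.2 + t * (q.2 - p.2) := by rw [hX]; rfl
  unfold ori
  rw [x1, x2]
  ring

lemma on_line {S : Finset Pt} (gp : GenPos S) {v X p q a : Pt} {t : ℝ} (hX : X = lnp p q t)
    (hp : p ∈ S) (hq : q ∈ S) (hpq : p ≠ q) (ha : a ∈ S) (D : ori v X p ≠ 0)
    (hs : bet v X p a + gam v X p a = 1) : a = p ∨ a = q := by
  apply ori_eq gp hp hq ha hpq
  have e1 := rec1 D a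
  have e2 := rec2 D a
  have x1 : X.1 = p.1 + t * (q.1 - p.1) := by rw [hX]; rfl
  have x2 : X.2 = p.2 + t * (q.2 - p.2) := by rw [hX]; rfl
  have hb : bet v X p a = 1 - gam v X p a := by linarith
  generalize bet v X p a = β at *
  generalize gam v X p a = γ at *
  subst hb
  rw [x1] at e1; rw [x2] at e2
  unfold ori
  linear_combination (q.1 - p.1) * e2 - (q.2 - p.2) * e1

def Allowed (S : Finset Pt) (r : Pt) (idx : Pt → ℕ) (e : Sym2 Pt) : Prop :=
  InS S e ∧ ∀ x ∈ e, ∀ y ∈ e, x ≠ r → y ≠ r → idx x = idx y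

lemma allowed_mk {S : Finset Pt} {r : Pt} {idx : Pt → ℕ} {x y : Pt} (hx : x ∈ S) (hy : y ∈ S)
    (hxy : x ≠ y) (h : x ≠ r → y ≠ r → idx x = idx y) : Allowed S r idx s(x, y) := by
  refine ⟨inS_mk.2 ⟨hxy, hx, hy⟩, ?_⟩
  intro a ha b hb h1 h2
  rcases Sym2.mem_iff.1 ha with rfl | rfl <;> rcases Sym2.mem_iff.1 hb with rfl | rfl
  · rfl
  · exact h h1 h2
  · exact (h h2 h1).symm
  · rfl

structure Maxl (S : Finset Pt) (r : Pt) (idx : Pt → ℕ) (G : Finset (Sym2 Pt)) : Prop where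
  gp : GenPos S
  rS : r ∈ S
  nc : NoCross G
  al : ∀ g ∈ G, Allowed S r idx g
  mx : ∀ e, Allowed S r idx e → (∀ g ∈ G, g ≠ e → NoCrossPair e g) → e ∈ G

lemma Maxl.mem {S : Finset Pt} {r : Pt} {idx : Pt → ℕ} {G : Finset (Sym2 Pt)}
    (M : Maxl S r idx G) {e : Sym2 Pt} (he : Allowed S r idx e)
    (h : ∀ g ∈ G, g ≠ e → ∀ Y, Y ∈ segOf g → Y ∈ segOf e → Y ∈ S) : e ∈ G :=
  M.mx e he fun g hg hne => nocross_of M.gp he.1 (M.al g hg).1 fun Y h1 h2 => h g hg hne Y h2 h1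

structure Ordr (S : Finset Pt) (r : Pt) (ξ : Pt → ℝ) (idx : Pt → ℕ) : Prop where
  ord : ∀ x ∈ S, x ≠ r → ∀ y ∈ S, y ≠ r → (ξ x < ξ y ↔ 0 < ori r x y)
  mono : ∀ x ∈ S, x ≠ r → ∀ y ∈ S, y ≠ r → ξ x ≤ ξ y → idx x ≤ idx y

lemma Half.ne_r {S : Finset Pt} {r v X p a : Pt} {τ : ℝ} (hX : X = lnp v r τ) (H : Half S v X p a)
    : a ≠ r := by
  rintro rfl
  have := half_ord1 hX H.D a
  have h0 : ori a v a = 0 := by unfold ori; ring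
  rw [h0] at this
  rcases mul_eq_zero.1 this.symm with h | h
  · exact H.ga.ne' h
  · apply H.D
    rw [hX]
    have : ori v (lnp v a τ) p = - τ * ori a v p := by unfold ori lnp; ring
    rw [this, h]; ring

def FaceConcl (S : Finset Pt) (r : Pt) (ξ : Pt → ℝ) (idx : Pt → ℕ) (G : Finset (Sym2 Pt))
    (v a b : Pt) : Prop :=
  a ∈ S ∧ b ∈ S ∧ a ≠ r ∧ b ≠ r ∧ s(v, a) ∈ G ∧ s(v, b) ∈ G ∧ s(a, b) ∈ G ∧
    ξ a < ξ v ∧ ξ v < ξ b ∧ idx a = idx v ∧ idx b = idx v ∧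
    ∃ θ ζ : ℝ, 0 < θ ∧ θ < 1 ∧ 0 < ζ ∧ lnp a b θ = lnp v r ζ

lemma face_core {S : Finset Pt} {G : Finset (Sym2 Pt)} {r v X p q : Pt} {τ : ℝ}
    {idx : Pt → ℕ} {ξ : Pt → ℝ} (M : Maxl S r idx G) (O : Ordr S r ξ idx)
    (h : Ctx S G r v X s(p, q) τ) (hpr : p ≠ r) (hqr : q ≠ r) (hpv : p ≠ v) (hqv : q ≠ v)
    (hneg : ori r v p < 0) : ∃ a b, FaceConcl S r ξ idx G v a b := by
  obtain ⟨hpq, hp, hq⟩ := inS_mk.1 (h.gs _ h.fG)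
  obtain ⟨t, t0, t1, ht⟩ := mem_seg_open hp hq h.XS h.Xf
  have hX := h.hX
  have hτ := h.t0
  have Dp : ori v X p = - τ * ori r v p := by rw [hX]; unfold ori lnp; ring
  have Dq : ori v X q = - τ * ori r v q := by rw [hX]; unfold ori lnp; ring
  have hrel : (1 - t) * ori r v p + t * ori r v q = 0 := by
    have h1 : ori r v X = 0 := by rw [hX]; unfold ori lnp; ring
    rw [ht, ori_lnp] at h1; linarith
  have hposq : 0 < ori r v q := by
    by_contra hc
    push Not at hc
    nlinarith
  have Dp' : 0 < ori v X p := by rw [Dp]; nlinarith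
  have Dq' : ori v X q < 0 := by rw [Dq]; nlinarith
  obtain ⟨a, H⟩ := h.exists_half hp hpv Dp'.ne'
  have h' : Ctx S G r v X s(q, p) τ := by rw [Sym2.eq_swap]; exact h
  obtain ⟨b, H'⟩ := h'.exists_half hq hqv Dq'.ne
  have har := H.ne_r hX
  have hbr := H'.ne_r hX
  have hG : ∀ y, gam v X p y * ori v X p = gam v X q y * ori v X q := by
    intro y; unfold gam; field_simp [Dp'.ne', Dq'.ne]
  have hsum := sum_eq (v := v) ht Dp'.ne' Dq'.ne
  have gb : gam v X p b < 0 := by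
    have := hG b
    have := H'.ga
    by_contra hc
    push Not at hc
    nlinarith
  have ga' : gam v X q a < 0 := by
    have := hG a
    have := H.ga
    by_contra hc
    push Not at hc
    nlinarith
  have sb : 0 < sig v X p a b := by
    have h1 : 0 < bet v X p b := by linarith [hsum b, H'.ga, H'.ba]
    have := mul_pos h1 H.ga
    have := mul_nonneg H.ba (neg_nonneg.2 gb.le)
    unfold sig; linarith
  have sa' : 0 < sig v X q b a := by
    have h1 : 0 < bet v X q a := by linarith [hsum a, H.ga, H.ba]
    have := mul_pos h1 H'.ga
    have := mul_nonneg H'.ba (neg_nonneg.2 ga'.le)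
    unfold sig; linarith
  -- order
  have va1 : ξ a < ξ v := by
    rw [O.ord a H.aS har v h.vS h.vr, ori_swap, half_ord1 hX H.D]
    nlinarith [H.ga]
  have vb1 : ξ v < ξ b := by
    rw [O.ord v h.vS h.vr b H'.aS hbr, half_ord1 hX H'.D]
    nlinarith [H'.ga]
  have pa1 : ξ p ≤ ξ a := by
    rw [← not_lt, O.ord a H.aS har p hp hpr, ori_swap, half_ord2 hX H.D, ori_swap r p v, not_lt]
    have : 0 ≤ 1 - bet v X p a - gam v X p a + bet v X p a * (1 - τ) := by
      have := mul_nonneg H.ba (sub_nonneg.2 h.t1.le)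
      linarith [H.ua]
    nlinarith
  have qb1 : ξ b ≤ ξ q := by
    rw [← not_lt, O.ord q hq hqr b H'.aS hbr, half_ord2 hX H'.D, ori_swap r q v, not_lt]
    have : 0 ≤ 1 - bet v X q b - gam v X q b + bet v X q b * (1 - τ) := by
      have := mul_nonneg H'.ba (sub_nonneg.2 h.t1.le)
      linarith [H'.ua]
    nlinarith
  have ipq : idx p = idx q := (M.al _ h.fG).2 p (by simp) q (by simp) hpr hqr
  have i1 := O.mono p hp hpr a H.aS har pa1
  have i2 := O.mono a H.aS har v h.vS h.vr va1.le
  have i3 := O.mono v h.vS h.vr b H'.aS hbr vb1.le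
  have i4 := O.mono b H'.aS hbr q hq hqr qb1
  have hab : a ≠ b := by rintro rfl; linarith
  refine ⟨a, b, H.aS, H'.aS, har, hbr, ?_, ?_, ?_, va1, vb1, by omega, by omega, ?_⟩
  · exact M.mem (allowed_mk h.vS H.aS H.av.symm fun _ _ => by omega)
      fun g hg hne Y h1 h2 => h.va_free H hg hne h1 h2
  · exact M.mem (allowed_mk h.vS H'.aS H'.av.symm fun _ _ => by omega)
      fun g hg hne Y h1 h2 => h'.va_free H' hg hne h1 h2
  · by_cases hf : s(a, b) = s(p, q)
    · rw [hf]; exact h.fG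
    · refine M.mem (allowed_mk H.aS H'.aS hab fun _ _ => by omega) fun g hg hne Y h1 h2 => ?_
      by_contra hYS
      have hgf : g ≠ s(p, q) := by
        rintro rfl
        have hs := h.f_sum H.D h1
        obtain ⟨s, s0, s1, rfl⟩ := mem_seg_open H.aS H'.aS hYS h2
        rw [bet_lnp, gam_lnp] at hs
        have k1 := H.ua
        have k2 := H'.ua
        rw [← hsum b] at k2
        have z1 : bet v X p a + gam v X p a = 1 := by nlinarith
        have z2 : bet v X p b + gam v X p b = 1 := by nlinarith
        have c1 := on_line h.gp ht hp hq hpq H.aS H.D z1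
        have c2 := on_line h.gp ht hp hq hpq H'.aS H.D z2
        apply hf
        rcases c1 with rfl | rfl <;> rcases c2 with rfl | rfl
        · exact absurd rfl hab
        · rfl
        · exact Sym2.eq_swap
        · exact absurd rfl hab
      rcases le_total 0 (gam v X p Y) with hc | hc
      · exact h.ab_half H H'.aS (by rw [hsum b]; exact H'.ua) sb hg hgf h1 h2 hYS hc
      · have hc' : 0 ≤ gam v X q Y := by
          have := hG Y
          by_contra hc2
          push Not at hc2
          nlinarith
        rw [Sym2.eq_swap] at h2 hgf
        exact h'.ab_half H' H.aS (by rw [← hsum a]; exact H.ua) sa' hg (by rw [Sym2.eq_swap]; rwa [Sym2.eq_swap] at hgf) h1 h2 hYS hc'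
  · have e1 := rec1 H.D a
    have e2 := rec2 H.D a
    have f1 := rec1 H'.D b
    have f2 := rec2 H'.D b
    have gaa := H.ga
    have gbb := H'.ga
    have baa := H.ba
    have bbb := H'.ba
    have x1 : X.1 = p.1 + t * (q.1 - p.1) := by rw [ht]; rfl
    have x2 : X.2 = p.2 + t * (q.2 - p.2) := by rw [ht]; rfl
    have y1 : X.1 = v.1 + τ * (r.1 - v.1) := by rw [hX]; rfl
    have y2 : X.2 = v.2 + τ * (r.2 - v.2) := by rw [hX]; rfl
    generalize bet v X p a = β at *
    generalize gam v X p a = γ at *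
    generalize bet v X q b = β' at *
    generalize gam v X q b = γ' at *
    have t1' : 0 < 1 - t := by linarith
    have hW : 0 < (1 - t) * γ' + t * γ := by positivity
    refine ⟨t * γ / ((1 - t) * γ' + t * γ),
      τ * ((1 - t) * γ' * β + t * γ * β' + γ * γ') / ((1 - t) * γ' + t * γ), by positivity, ?_,
      by positivity, ?_⟩
    · rw [div_lt_one hW]; nlinarith
    · unfold lnp
      refine Prod.ext ?_ ?_
      · simp only
        field_simp
        linear_combination (1 - t) * γ' * e1 + t * γ * f1 + ((1 - t) * γ' * β + t * γ * β' + γ * γ') * y1 - γ * γ' * x1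
      · simp only
        field_simp
        linear_combination (1 - t) * γ' * e2 + t * γ * f2 + ((1 - t) * γ' * β + t * γ * β' + γ * γ') * y2 - γ * γ' * x2


lemma isClosed_segOf (e : Sym2 Pt) : IsClosed (segOf e) := by
  induction e using Sym2.ind with
  | _ p q =>
    have : segOf s(p, q) = (fun t => lnp p q t) '' Set.Icc (0:ℝ) 1 := by
      ext Y
      rw [mem_seg]
      constructor
      · rintro ⟨t, h0, h1, h⟩; exact ⟨t, ⟨h0, h1⟩, h.symm⟩
      · rintro ⟨t, ⟨h0, h1⟩, h⟩; exact ⟨t, h0, h1, h.symm⟩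
    rw [this]
    apply IsCompact.isClosed
    apply isCompact_Icc.image
    unfold lnp
    fun_prop

lemma lnp_inj {v r : Pt} (h : v ≠ r) {s t : ℝ} (e : lnp v r s = lnp v r t) : s = t := by
  unfold lnp at e
  rw [Prod.mk.injEq] at e
  obtain ⟨e1, e2⟩ := e
  by_contra hne
  have hne : s - t ≠ 0 := sub_ne_zero.2 hne
  apply h
  have f1 : (s - t) * (r.1 - v.1) = 0 := by linear_combination e1
  have f2 : (s - t) * (r.2 - v.2) = 0 := by linear_combination e2
  have g1 := (mul_eq_zero.1 f1).resolve_left hne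
  have g2 := (mul_eq_zero.1 f2).resolve_left hne
  exact Prod.ext (by linarith) (by linarith)

/-- two edges from the same vertex meeting away from it are equal -/
lemma share {S : Finset Pt} (gp : GenPos S) {v r w : Pt} (hv : v ∈ S) (hr : r ∈ S) (hw : w ∈ S)
    (hvr : v ≠ r) (hvw : v ≠ w) {s : ℝ} (hs : s ≠ 0)
    (h : lnp v r s ∈ segOf s(v, w)) : w = r := by
  obtain ⟨t, t0, t1, ht⟩ := mem_seg.1 h
  have h0 : ori v r (lnp v w t) = 0 := by rw [← ht]; exact ori_lnp_self v r s
  rw [ori_lnp] at h0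
  have z : ori v r v = 0 := by unfold ori; ring
  rw [z] at h0
  have htn : t ≠ 0 := by
    rintro rfl
    rw [lnp_zero] at ht
    exact hs (lnp_inj hvr (ht.trans (lnp_zero v r).symm))
  have : ori v r w = 0 := by
    rcases mul_eq_zero.1 (show t * ori v r w = 0 by linarith) with h | h
    · exact absurd h htn
    · exact h
  rcases ori_eq gp hv hr hw hvr this with h | h
  · exact absurd h.symm hvw
  · exact h

lemma lnp_rev (v r : Pt) (t : ℝ) : lnp v r t = lnp r v (1 - t) := by
  unfold lnp; refine Prod.ext ?_ ?_ <;> simp only <;> ring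

lemma face {S : Finset Pt} {G : Finset (Sym2 Pt)} {r v : Pt}
    {idx : Pt → ℕ} {ξ : Pt → ℝ} (M : Maxl S r idx G) (O : Ordr S r ξ idx)
    (hv : v ∈ S) (hvr : v ≠ r) (hG : s(v, r) ∉ G) : ∃ a b, FaceConcl S r ξ idx G v a b := by
  have gs : ∀ g ∈ G, InS S g := fun g hg => (M.al g hg).1
  -- edges through v do not meet the ray
  have hvg : ∀ g ∈ G, v ∈ segOf g → ∀ s, s ≠ 0 → lnp v r s ∉ segOf g := by
    intro g hg h1 s hs h2
    have hvm := mem_segOf_S M.gp (gs g hg) hv h1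
    obtain ⟨w, rfl⟩ := Sym2.mem_iff_exists.1 hvm
    obtain ⟨n, _, hw⟩ := inS_mk.1 (gs _ hg)
    have := share M.gp hv M.rS hw hvr n hs h2
    subst this
    exact hG hg
  set K : Set ℝ := ⋃ g ∈ G.filter (fun g => v ∉ segOf g), Set.Icc 0 1 ∩ (fun t => lnp v r t) ⁻¹' segOf g
    with hK
  have hcont : Continuous (fun t : ℝ => lnp v r t) := by unfold lnp; fun_prop
  have hKc : IsCompact K := by
    apply Finset.isCompact_biUnion
    intro g _
    exact isCompact_Icc.inter_right ((isClosed_segOf g).preimage hcont)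
  have hmemK : ∀ t, t ∈ K ↔ ∃ g ∈ G, v ∉ segOf g ∧ 0 ≤ t ∧ t ≤ 1 ∧ lnp v r t ∈ segOf g := by
    intro t
    rw [hK]
    simp only [Set.mem_iUnion, Finset.mem_filter, Set.mem_inter_iff, Set.mem_Icc, Set.mem_preimage,
      exists_prop]
    constructor
    · rintro ⟨g, ⟨h1, h2⟩, ⟨h3, h4⟩, h5⟩; exact ⟨g, h1, h2, h3, h4, h5⟩
    · rintro ⟨g, h1, h2, h3, h4, h5⟩; exact ⟨g, ⟨h1, h2⟩, ⟨h3, h4⟩, h5⟩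
  have hne : ∃ t1, t1 ∈ K ∧ t1 < 1 := by
    by_contra hc
    push Not at hc
    refine hG (M.mem (allowed_mk hv M.rS hvr fun _ h => absurd rfl h) fun g hg hne Y h1 h2 => ?_)
    by_contra hYS
    obtain ⟨s, s0, s1, rfl⟩ := mem_seg_open hv M.rS hYS h2
    by_cases hvg' : v ∈ segOf g
    · exact hvg g hg hvg' s s0.ne' h1
    · exact absurd (hc s ((hmemK s).2 ⟨g, hg, hvg', s0.le, s1.le, h1⟩)) (not_le.2 s1)
  obtain ⟨t1, ht1, ht1'⟩ := hne
  obtain ⟨τ, hτK, hτmin⟩ := hKc.exists_isLeast ⟨t1, ht1⟩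
  have hτ1 : τ < 1 := lt_of_le_of_lt (hτmin ht1) ht1'
  obtain ⟨f, hf, hvf, τ0, -, hXf⟩ := (hmemK τ).1 hτK
  have hτ0 : 0 < τ := by
    refine lt_of_le_of_ne τ0 ?_
    rintro rfl
    rw [lnp_zero] at hXf; exact hvf hXf
  have hXS : lnp v r τ ∉ S := by
    intro hc
    rcases ori_eq M.gp hv M.rS hc hvr (ori_lnp_self v r τ) with h | h
    · exact hτ0.ne' (lnp_inj hvr (h.trans (lnp_zero v r).symm))
    · exact hτ1.ne (lnp_inj hvr (h.trans (lnp_one v r).symm))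
  have C : Ctx S G r v (lnp v r τ) f τ := by
    refine ⟨M.gp, M.nc, gs, hf, hXS, hXf, ?_, hv, M.rS, hvr, hτ0, hτ1, rfl⟩
    intro g hg t t0 t1 hmem
    have e : lnp v (lnp v r τ) t = lnp v r (t * τ) := by
      unfold lnp; refine Prod.ext ?_ ?_ <;> simp only <;> ring
    rw [e] at hmem
    by_cases hvg' : v ∈ segOf g
    · exact hvg g hg hvg' _ (by positivity) hmem
    · have := hτmin ((hmemK (t * τ)).2 ⟨g, hg, hvg', by positivity, by nlinarith, hmem⟩)
      nlinarith
  induction f using Sym2.ind with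
  | _ p q =>
    obtain ⟨hpq, hp, hq⟩ := inS_mk.1 (gs _ hf)
    have hpv : p ≠ v := by rintro rfl; exact hvf (left_mem_segOf _ _)
    have hqv : q ≠ v := by rintro rfl; exact hvf (right_mem_segOf _ _)
    have aux : ∀ {p q : Pt}, p ≠ q → p ∈ S → q ∈ S → q ≠ v → lnp v r τ ∈ segOf s(p, q) → p ≠ r := by
      intro p q hpq hp hq hqv hm
      rintro rfl
      rw [lnp_rev] at hm
      exact hqv (share M.gp hp hv hq hvr.symm hpq (by linarith) hm)
    have hpr := aux hpq hp hq hqv hXf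
    have hqr := aux hpq.symm hq hp hpv (by rw [Sym2.eq_swap]; exact hXf)
    rcases lt_trichotomy (ori r v p) 0 with h | h | h
    · exact face_core M O C hpr hqr hpv hqv h
    · exact absurd h (ori_ne M.gp M.rS hv hp hvr.symm hpr.symm hpv.symm)
    · have C' : Ctx S G r v (lnp v r τ) s(q, p) τ := by rw [Sym2.eq_swap]; exact C
      refine face_core M O C' hqr hpr hqv hpv ?_
      obtain ⟨t, t0, t1, ht⟩ := mem_seg_open hp hq hXS hXf
      have h1 : ori r v (lnp v r τ) = 0 := by unfold ori lnp; ring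
      rw [ht, ori_lnp] at h1
      by_contra hc
      push Not at hc
      nlinarith


def hh (r c x : Pt) : ℝ := c.1 * (x.1 - r.1) + c.2 * (x.2 - r.2)
def kk (r c x : Pt) : ℝ := c.1 * (x.2 - r.2) - c.2 * (x.1 - r.1)
def xi (r c x : Pt) : ℝ := kk r c x / hh r c x
def Af (r c a b : Pt) : ℝ := (kk r c b - kk r c a) / (hh r c a * kk r c b - kk r c a * hh r c b)
def Bf (r c a b : Pt) : ℝ := (hh r c a - hh r c b) / (hh r c a * kk r c b - kk r c a * hh r c b)

lemma hk_ori (r c x y : Pt) : hh r c x * kk r c y - kk r c x * hh r c y =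
    (c.1 ^ 2 + c.2 ^ 2) * ori r x y := by unfold hh kk ori; ring

lemma hh_lnp (r c x y : Pt) (t : ℝ) : hh r c (lnp x y t) = hh r c x + t * (hh r c y - hh r c x) := by
  unfold hh lnp; ring
lemma kk_lnp (r c x y : Pt) (t : ℝ) : kk r c (lnp x y t) = kk r c x + t * (kk r c y - kk r c x) := by
  unfold kk lnp; ring
lemma hh_r (r c : Pt) : hh r c r = 0 := by unfold hh; ring
lemma kk_r (r c : Pt) : kk r c r = 0 := by unfold kk; ring

lemma c_pos {r c x : Pt} (h : 0 < hh r c x) : 0 < c.1 ^ 2 + c.2 ^ 2 := by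
  by_contra hc
  push Not at hc
  have e1 : c.1 = 0 := by nlinarith [sq_nonneg c.1, sq_nonneg c.2]
  have e2 : c.2 = 0 := by nlinarith [sq_nonneg c.1, sq_nonneg c.2]
  unfold hh at h
  rw [e1, e2] at h; linarith

lemma xi_lt {r c x y : Pt} (hx : 0 < hh r c x) (hy : 0 < hh r c y) :
    xi r c x < xi r c y ↔ 0 < hh r c x * kk r c y - kk r c x * hh r c y := by
  unfold xi
  rw [div_lt_div_iff₀ hx hy]
  constructor <;> intro h <;> linarith

lemma xi_ord {r c x y : Pt} (hx : 0 < hh r c x) (hy : 0 < hh r c y) :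
    xi r c x < xi r c y ↔ 0 < ori r x y := by
  rw [xi_lt hx hy, hk_ori]
  exact mul_pos_iff_of_pos_left (c_pos hx)

lemma AB_a {r c a b : Pt} (hd : hh r c a * kk r c b - kk r c a * hh r c b ≠ 0) :
    Af r c a b * hh r c a + Bf r c a b * kk r c a = 1 := by
  unfold Af Bf; rw [div_mul_eq_mul_div, div_mul_eq_mul_div, ← add_div, div_eq_one_iff_eq hd]; ring
lemma AB_b {r c a b : Pt} (hd : hh r c a * kk r c b - kk r c a * hh r c b ≠ 0) :
    Af r c a b * hh r c b + Bf r c a b * kk r c b = 1 := by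
  unfold Af Bf; rw [div_mul_eq_mul_div, div_mul_eq_mul_div, ← add_div, div_eq_one_iff_eq hd]; ring
lemma AB_lnp {r c a b : Pt} (hd : hh r c a * kk r c b - kk r c a * hh r c b ≠ 0) (t : ℝ) :
    Af r c a b * hh r c (lnp a b t) + Bf r c a b * kk r c (lnp a b t) = 1 := by
  rw [hh_lnp, kk_lnp]
  linear_combination (1 - t) * AB_a hd + t * AB_b hd

lemma hk_inj {r c x y : Pt} (hc : 0 < c.1 ^ 2 + c.2 ^ 2) (h1 : hh r c x = hh r c y)
    (h2 : kk r c x = kk r c y) : x = y := by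
  unfold hh at h1; unfold kk at h2
  have e1 : (c.1 ^ 2 + c.2 ^ 2) * (x.1 - y.1) = 0 := by linear_combination c.1 * h1 - c.2 * h2
  have e2 : (c.1 ^ 2 + c.2 ^ 2) * (x.2 - y.2) = 0 := by linear_combination c.2 * h1 + c.1 * h2
  have f1 := (mul_eq_zero.1 e1).resolve_left hc.ne'
  have f2 := (mul_eq_zero.1 e2).resolve_left hc.ne'
  exact Prod.ext (by linarith) (by linarith)

lemma seg_pt {r c a b : Pt} (ha : 0 < hh r c a) (hb : 0 < hh r c b) {s : ℝ} (h1 : xi r c a < s)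
    (h2 : s < xi r c b) : ∃ t, 0 < t ∧ t < 1 ∧ 0 < hh r c (lnp a b t) ∧
      kk r c (lnp a b t) = s * hh r c (lnp a b t) := by
  unfold xi at h1 h2
  rw [div_lt_iff₀ ha] at h1
  rw [lt_div_iff₀ hb] at h2
  have p1 : 0 < s * hh r c a - kk r c a := by linarith
  have p2 : 0 < kk r c b - s * hh r c b := by linarith
  have hW : 0 < (s * hh r c a - kk r c a) + (kk r c b - s * hh r c b) := by linarith
  have t1 : (s * hh r c a - kk r c a) / ((s * hh r c a - kk r c a) + (kk r c b - s * hh r c b)) < 1 := by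
    rw [div_lt_one hW]; linarith
  have t0 : 0 < (s * hh r c a - kk r c a) / ((s * hh r c a - kk r c a) + (kk r c b - s * hh r c b)) := by
    positivity
  refine ⟨_, t0, t1, ?_, ?_⟩
  · rw [hh_lnp]
    nlinarith [mul_pos t0 hb, mul_pos (sub_pos.2 t1) ha]
  · rw [hh_lnp, kk_lnp]
    field_simp
    ring

lemma NoCrossPair.symm' {e f : Sym2 Pt} (h : NoCrossPair e f) : NoCrossPair f e :=
  fun _ hY => ⟨(h ⟨hY.2, hY.1⟩).2, (h ⟨hY.2, hY.1⟩).1⟩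

lemma exists_max {S : Finset Pt} {r : Pt} {idx : Pt → ℕ} {E : Finset (Sym2 Pt)} (gp : GenPos S)
    (rS : r ∈ S) (nc : NoCross E) (al : ∀ e ∈ E, Allowed S r idx e) :
    ∃ G, E ⊆ G ∧ Maxl S r idx G := by
  set T := S.sym2.powerset.filter (fun G => E ⊆ G ∧ NoCross G ∧ ∀ g ∈ G, Allowed S r idx g) with hT
  have sub : ∀ G : Finset (Sym2 Pt), (∀ g ∈ G, Allowed S r idx g) → G ⊆ S.sym2 := by
    intro G hG g hg
    exact Finset.mem_sym2_iff.2 (hG g hg).1.2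
  have hE : E ∈ T := by
    rw [hT, Finset.mem_filter, Finset.mem_powerset]
    exact ⟨sub E al, Finset.Subset.refl _, nc, al⟩
  obtain ⟨G, hG, hmax⟩ := Finset.exists_max_image T Finset.card ⟨E, hE⟩
  rw [hT, Finset.mem_filter] at hG
  obtain ⟨-, hEG, hnc, hal⟩ := hG
  refine ⟨G, hEG, gp, rS, hnc, hal, ?_⟩
  intro e he hcr
  by_contra hne
  have hal' : ∀ g ∈ insert e G, Allowed S r idx g := by
    intro g hg
    rcases Finset.mem_insert.1 hg with rfl | hg
    · exact he
    · exact hal g hg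
  have : insert e G ∈ T := by
    rw [hT, Finset.mem_filter, Finset.mem_powerset]
    refine ⟨sub _ hal', hEG.trans (Finset.subset_insert _ _), ?_, hal'⟩
    intro x hx y hy hxy
    rcases Finset.mem_insert.1 hx with hx' | hx' <;> rcases Finset.mem_insert.1 hy with hy' | hy'
    · exact absurd (hx'.trans hy'.symm) hxy
    · rw [hx'] at hxy ⊢; exact hcr y hy' hxy.symm
    · rw [hy'] at hxy ⊢; exact (hcr x hx' hxy).symm'
    · exact hnc x hx' y hy' hxy
  have := hmax _ this
  rw [Finset.card_insert_of_notMem hne] at this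
  omega

lemma level {S : Finset Pt} {r c : Pt} {idx : Pt → ℕ} {E : Finset (Sym2 Pt)} (gp : GenPos S)
    (rS : r ∈ S) (hpos : ∀ v ∈ S, v ≠ r → 0 < hh r c v)
    (mono : ∀ x ∈ S, x ≠ r → ∀ y ∈ S, y ≠ r → xi r c x ≤ xi r c y → idx x ≤ idx y)
    (hE : IsPST S E) (al : ∀ e ∈ E, Allowed S r idx e) (φ : Pt → Prop) :
    ∃ E', IsPST S E' ∧ ReachesIn (SimRotation S) 3 E E' ∧ ReachesIn (SimRotation S) 3 E' E ∧
      ∀ e ∈ E', ∃ x y, e = s(x, y) ∧ x ∈ S ∧ x ≠ r ∧ y ∈ S ∧ (y = r ∨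
        (y ≠ r ∧ idx x = idx y ∧ (φ x → xi r c y < xi r c x) ∧ (¬ φ x → xi r c x < xi r c y))) := by
  obtain ⟨G, hEG, M⟩ := exists_max gp rS hE.2.1 al
  have O : Ordr S r (xi r c) idx :=
    ⟨fun x hx hxr y hy hyr => xi_ord (hpos x hx hxr) (hpos y hy hyr), mono⟩
  have hF : ∀ v, ∃ a b, v ∈ S → v ≠ r → s(v, r) ∉ G → FaceConcl S r (xi r c) idx G v a b := by
    intro v
    by_cases h : v ∈ S ∧ v ≠ r ∧ s(v, r) ∉ G
    · obtain ⟨a, b, hab⟩ := face M O h.1 h.2.1 h.2.2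
      exact ⟨a, b, fun _ _ _ => hab⟩
    · exact ⟨v, v, fun h1 h2 h3 => absurd ⟨h1, h2, h3⟩ h⟩
  choose a b hab using hF
  set V := S.filter (fun v => v ≠ r ∧ s(v, r) ∉ G) with hV
  have hVm : ∀ v, v ∈ V ↔ v ∈ S ∧ v ≠ r ∧ s(v, r) ∉ G := by intro v; rw [hV, Finset.mem_filter]
  have hF : ∀ v ∈ V, FaceConcl S r (xi r c) idx G v (a v) (b v) := fun v hv =>
    hab v ((hVm v).1 hv).1 ((hVm v).1 hv).2.1 ((hVm v).1 hv).2.2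
  have ha : ∀ v ∈ V, 0 < hh r c (a v) := fun v hv => hpos _ (hF v hv).1 (hF v hv).2.2.1
  have hb : ∀ v ∈ V, 0 < hh r c (b v) := fun v hv => hpos _ (hF v hv).2.1 (hF v hv).2.2.2.1
  have hv0 : ∀ v ∈ V, 0 < hh r c v := fun v hv => hpos _ ((hVm v).1 hv).1 ((hVm v).1 hv).2.1
  have h1 : ∀ v ∈ V, xi r c (a v) < xi r c v := fun v hv => (hF v hv).2.2.2.2.2.2.2.1
  have h2 : ∀ v ∈ V, xi r c v < xi r c (b v) := fun v hv => (hF v hv).2.2.2.2.2.2.2.2.1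
  have hd : ∀ v ∈ V, hh r c (a v) * kk r c (b v) - kk r c (a v) * hh r c (b v) ≠ 0 := fun v hv =>
    ((xi_lt (ha v hv) (hb v hv)).1 ((h1 v hv).trans (h2 v hv))).ne'
  obtain ⟨σ, hσ⟩ := depth_rank V (xi r c) (fun x => 1 / hh r c x) a b
    (fun v => Af r c (a v) (b v)) (fun v => Bf r c (a v) (b v)) h1 h2
    (by
      intro v hv
      have := AB_a (hd v hv)
      have := ha v hv
      simp only [xi]; field_simp; linarith)
    (by
      intro v hv
      have := AB_b (hd v hv)
      have := hb v hv
      simp only [xi]; field_simp; linarith)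
    (by
      intro v hv
      obtain ⟨θ, ζ, θ0, θ1, ζ0, hθ⟩ := (hF v hv).2.2.2.2.2.2.2.2.2.2.2
      have e := AB_lnp (hd v hv) θ
      have hp : 0 < hh r c (lnp (a v) (b v) θ) := by
        rw [hh_lnp]
        nlinarith [mul_pos θ0 (hb v hv), mul_pos (sub_pos.2 θ1) (ha v hv)]
      rw [hθ] at e hp
      rw [hh_lnp, kk_lnp, hh_r, kk_r] at e
      rw [hh_lnp, hh_r] at hp
      have hv' := hv0 v hv
      simp only [xi]
      generalize Af r c (a v) (b v) = A at *
      generalize Bf r c (a v) (b v) = B at *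
      have hz : 0 < 1 - ζ := by
        by_contra hc
        push Not at hc
        nlinarith
      have hm : 1 < A * hh r c v + B * kk r c v := by
        by_contra hc
        push Not at hc
        nlinarith
      have : A + B * (kk r c v / hh r c v) = (A * hh r c v + B * kk r c v) / hh r c v := by
        field_simp
      rw [this]
      exact div_lt_div_of_pos_right hm hv')
    (by
      intro v hv w hw s s1 s2 s3 s4 he
      obtain ⟨t, t0, t1, tp, tk⟩ := seg_pt (ha v hv) (hb v hv) s1 s2
      obtain ⟨t', t0', t1', tp', tk'⟩ := seg_pt (ha w hw) (hb w hw) s3 s4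
      have e1 := AB_lnp (hd v hv) t
      have e2 := AB_lnp (hd w hw) t'
      rw [tk] at e1
      rw [tk'] at e2
      have q1 : (Af r c (a v) (b v) + Bf r c (a v) (b v) * s) * hh r c (lnp (a v) (b v) t) = 1 := by
        linear_combination e1
      have q2 : (Af r c (a v) (b v) + Bf r c (a v) (b v) * s) * hh r c (lnp (a w) (b w) t') = 1 := by
        rw [he]; linear_combination e2
      have hne : (Af r c (a v) (b v) + Bf r c (a v) (b v) * s) ≠ 0 := by
        intro h; rw [h] at q1; simp at q1
      have hhe : hh r c (lnp (a v) (b v) t) = hh r c (lnp (a w) (b w) t') :=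
        mul_left_cancel₀ hne (q1.trans q2.symm)
      have hP := hk_inj (c_pos (hv0 v hv)) hhe (by rw [tk, tk', hhe])
      have hxs : xi r c (lnp (a v) (b v) t) = s := by
        unfold xi; rw [tk]; field_simp
      have hse : s(a v, b v) = s(a w, b w) := by
        by_contra hne
        have := M.nc _ (hF v hv).2.2.2.2.2.2.1 _ (hF w hw).2.2.2.2.2.2.1 hne
          ⟨mem_seg.2 ⟨t, t0.le, t1.le, rfl⟩, mem_seg.2 ⟨t', t0'.le, t1'.le, hP⟩⟩
        have hm : lnp (a v) (b v) t ∈ s(a v, b v) := this.1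
        rcases Sym2.mem_iff.1 hm with h | h
        · rw [h] at hxs; linarith
        · rw [h] at hxs; linarith
      rcases Sym2.eq_iff.1 hse with ⟨x1, x2⟩ | ⟨x1, x2⟩
      · simp only [x1, x2]; exact ⟨trivial, trivial⟩
      · rw [x1] at s1; linarith)
  let A : Pt → Pt := fun v => if s(v, r) ∈ G then r else a v
  let B : Pt → Pt := fun v => if s(v, r) ∈ G then r else b v
  let ρ : Pt → ℕ := fun v => if v = r then 0 else if s(v, r) ∈ G then 1 else σ v + 2
  have key : ∀ v ∈ S, v ≠ r → s(v, r) ∉ G → ∀ x, x ∈ S → x ≠ r → (x ∈ V → σ x < σ v) → ρ x < ρ v := by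
    intro v hv hvr hvG x hx hxr h
    simp only [ρ, if_neg hvr, if_neg hxr, if_neg hvG]
    split_ifs with h'
    · omega
    · have := h ((hVm x).2 ⟨hx, hxr, h'⟩)
      omega
  obtain ⟨d, hd', hp, hr1, hr2⟩ := three_steps rS M.nc hE hEG A B ρ
    (by
      intro v hv hvr
      by_cases hvG : s(v, r) ∈ G
      · simp only [A, if_pos hvG]
        refine ⟨rS, hvG, ?_⟩
        simp [ρ, hvr, hvG]
      · simp only [A, if_neg hvG]
        have hvV := (hVm v).2 ⟨hv, hvr, hvG⟩
        obtain ⟨c1, c2, c3, c4, c5, c6, c7, _⟩ := hF v hvV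
        exact ⟨c1, c5, key v hv hvr hvG _ c1 c3 (hσ v hvV).1⟩)
    (by
      intro v hv hvr
      by_cases hvG : s(v, r) ∈ G
      · simp only [B, if_pos hvG]
        refine ⟨rS, hvG, ?_⟩
        simp [ρ, hvr, hvG]
      · simp only [B, if_neg hvG]
        have hvV := (hVm v).2 ⟨hv, hvr, hvG⟩
        obtain ⟨c1, c2, c3, c4, c5, c6, c7, _⟩ := hF v hvV
        exact ⟨c2, c6, key v hv hvr hvG _ c2 c4 (hσ v hvV).2⟩)
    (by
      intro v hv hvr
      by_cases hvG : s(v, r) ∈ G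
      · left; simp only [A, B, if_pos hvG]; exact ⟨trivial, trivial⟩
      · right
        simp only [A, B, if_neg hvG]
        have hvV := (hVm v).2 ⟨hv, hvr, hvG⟩
        obtain ⟨c1, c2, c3, c4, c5, c6, c7, _⟩ := hF v hvV
        exact ⟨c3, c4, (inS_mk.1 (M.al _ c7).1).1, c7⟩)
    φ
  refine ⟨_, hp, hr1, hr2, ?_⟩
  intro e he
  obtain ⟨v, hv, hvr, rfl⟩ := mem_edg.1 he
  refine ⟨v, d v, rfl, hv, hvr, ?_⟩
  rw [hd' v]
  by_cases hvG : s(v, r) ∈ G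
  · simp only [A, B, if_pos hvG, ite_self]
    exact ⟨rS, Or.inl trivial⟩
  · simp only [A, B, if_neg hvG]
    have hvV := (hVm v).2 ⟨hv, hvr, hvG⟩
    obtain ⟨c1, c2, c3, c4, c5, c6, c7, c8, c9, c10, c11, _⟩ := hF v hvV
    by_cases hφ : φ v
    · rw [if_pos hφ]
      exact ⟨c1, Or.inr ⟨c3, c10.symm, fun _ => c8, fun h => absurd hφ h⟩⟩
    · rw [if_neg hφ]
      exact ⟨c2, Or.inr ⟨c4, c11.symm, fun h => absurd h hφ, fun _ => c9⟩⟩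


def rnk (S : Finset Pt) (r c v : Pt) : ℕ := ((S.erase r).filter (fun w => xi r c w < xi r c v)).card

lemma rnk_mono {S : Finset Pt} {r c x y : Pt} (h : xi r c x ≤ xi r c y) : rnk S r c x ≤ rnk S r c y := by
  unfold rnk
  apply Finset.card_le_card
  intro w hw
  rw [Finset.mem_filter] at hw ⊢
  exact ⟨hw.1, lt_of_lt_of_le hw.2 h⟩

lemma rnk_lt {S : Finset Pt} {r c x y : Pt} (hx : x ∈ S) (hxr : x ≠ r) (h : xi r c x < xi r c y) :
    rnk S r c x < rnk S r c y := by
  unfold rnk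
  apply Finset.card_lt_card
  rw [Finset.ssubset_iff_of_subset]
  · refine ⟨x, ?_, ?_⟩
    · rw [Finset.mem_filter, Finset.mem_erase]; exact ⟨⟨hxr, hx⟩, h⟩
    · rw [Finset.mem_filter]; exact fun h => lt_irrefl _ h.2
  · intro w hw
    rw [Finset.mem_filter] at hw ⊢
    exact ⟨hw.1, hw.2.trans h⟩

lemma rnk_le (S : Finset Pt) (r c v : Pt) : rnk S r c v ≤ S.card :=
  (Finset.card_filter_le _ _).trans (Finset.card_le_card (Finset.erase_subset _ _))

lemma to_star {S : Finset Pt} {r c : Pt} {E : Finset (Sym2 Pt)} (gp : GenPos S)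
    (rS : r ∈ S) (hpos : ∀ v ∈ S, v ≠ r → 0 < hh r c v) (hE : IsPST S E) {K : ℕ}
    (hK : S.card < 2 ^ K) :
    ReachesIn (SimRotation S) (3 * K) E (starAt S r) ∧
      ReachesIn (SimRotation S) (3 * K) (starAt S r) E := by
  have main : ∀ j ≤ K, ∃ E', IsPST S E' ∧
      (∀ e ∈ E', Allowed S r (fun v => rnk S r c v / 2 ^ (K - j)) e) ∧
      ReachesIn (SimRotation S) (3 * j) E E' ∧ ReachesIn (SimRotation S) (3 * j) E' E := by
    intro j
    induction j with
    | zero =>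
      intro _
      refine ⟨E, hE, ?_, reaches_zero, reaches_zero⟩
      intro e he
      refine ⟨hE.1 e he, ?_⟩
      intro x _ y _ _ _
      simp only [Nat.sub_zero]
      rw [Nat.div_eq_of_lt ((rnk_le S r c x).trans_lt hK), Nat.div_eq_of_lt ((rnk_le S r c y).trans_lt hK)]
    | succ j ih =>
      intro hj
      obtain ⟨E1, p1, al1, r1, r1'⟩ := ih (by omega)
      obtain ⟨E2, p2, r2, r2', h2⟩ := level gp rS hpos
        (fun x _ _ y _ _ h => Nat.div_le_div_right (rnk_mono h)) p1 al1
        (fun v => Even (rnk S r c v / 2 ^ (K - (j + 1))))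
      refine ⟨E2, p2, ?_, reaches_trans r1 r2, ?_⟩
      · intro e he
        obtain ⟨x, y, rfl, hx, hxr, hy, h⟩ := h2 e he
        have hne : x ≠ y := (inS_mk.1 (p2.1 _ he)).1
        refine allowed_mk hx hy hne ?_
        intro _ hyr
        obtain ⟨-, h1, h3, h4⟩ := h.resolve_left hyr
        have hpow : 2 ^ (K - j) = 2 ^ (K - (j + 1)) * 2 := by
          rw [← pow_succ]; congr 1; omega
        rw [hpow, ← Nat.div_div_eq_div_mul, ← Nat.div_div_eq_div_mul] at h1
        by_cases hev : Even (rnk S r c x / 2 ^ (K - (j + 1)))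
        · have := Nat.div_le_div_right (c := 2 ^ (K - (j + 1))) (rnk_mono (S := S) (h3 hev).le)
          obtain ⟨m, hm⟩ := hev
          omega
        · have := Nat.div_le_div_right (c := 2 ^ (K - (j + 1))) (rnk_mono (S := S) (h4 hev).le)
          obtain ⟨m, hm⟩ := Nat.not_even_iff_odd.1 hev
          omega
      · have := reaches_trans r2' r1'
        rwa [show 3 * (j + 1) = 3 + 3 * j by ring]
  obtain ⟨E', p, al, r1, r2⟩ := main K le_rfl
  have : E' = starAt S r := by
    apply Finset.eq_of_subset_of_card_le
    · intro e he
      induction e using Sym2.ind with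
      | _ x y =>
        obtain ⟨hne, hx, hy⟩ := inS_mk.1 (p.1 _ he)
        unfold starAt
        rw [Finset.mem_image]
        by_cases hxr : x = r
        · subst hxr
          exact ⟨y, Finset.mem_erase.2 ⟨hne.symm, hy⟩, rfl⟩
        by_cases hyr : y = r
        · subst hyr
          exact ⟨x, Finset.mem_erase.2 ⟨hne, hx⟩, Sym2.eq_swap⟩
        exfalso
        have := (al _ he).2 x (by simp) y (by simp) hxr hyr
        simp only [Nat.sub_self, pow_zero, Nat.div_one] at this
        have ho := ori_ne gp rS hx hy (Ne.symm hxr) (Ne.symm hyr) hne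
        rcases lt_or_gt_of_ne ho with h | h
        · rw [ori_swap] at h
          have := rnk_lt (S := S) hy hyr ((xi_ord (hpos y hy hyr) (hpos x hx hxr)).2 (by linarith))
          omega
        · have := rnk_lt (S := S) hx hxr ((xi_ord (hpos x hx hxr) (hpos y hy hyr)).2 h)
          omega
    · unfold starAt
      refine Finset.card_image_le.trans ?_
      have := p.2.2.1
      rw [Finset.card_erase_of_mem rS]
      omega
  rw [← this]
  exact ⟨r1, r2⟩

lemma exists_root {S : Finset Pt} (h : S.Nonempty) :
    ∃ r ∈ S, ∃ c, ∀ v ∈ S, v ≠ r → 0 < hh r c v := by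
  obtain ⟨r, hr, hmax⟩ := Finset.exists_max_image S (fun x : Pt => x.1 ^ 2 + x.2 ^ 2) h
  refine ⟨r, hr, (-r.1, -r.2), ?_⟩
  intro v hv hvr
  have := hmax v hv
  simp only [hh]
  have hp : 0 < (v.1 - r.1) ^ 2 + (v.2 - r.2) ^ 2 := by
    by_contra hc
    push Not at hc
    have e1 : v.1 - r.1 = 0 := by nlinarith [sq_nonneg (v.1 - r.1), sq_nonneg (v.2 - r.2)]
    have e2 : v.2 - r.2 = 0 := by nlinarith [sq_nonneg (v.1 - r.1), sq_nonneg (v.2 - r.2)]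
    exact hvr (Prod.ext (by linarith) (by linarith))
  nlinarith

theorem stmt_0 :
    ∃ c : ℝ, 0 < c ∧ ∀ n : ℕ, 2 ≤ n → ∀ S : Finset Pt, S.card = n → GenPos S →
      ∀ E E' : Finset (Sym2 Pt), IsPST S E → IsPST S E' →
        ∃ m : ℕ, (m : ℝ) ≤ c * Real.log n ∧ ReachesIn (SimRotation S) m E E' := by
  have hl : 0 < Real.log 2 := Real.log_pos (by norm_num)
  refine ⟨12 / Real.log 2, by positivity, ?_⟩
  intro n hn S hS gp E E' hE hE'
  obtain ⟨r, rS, c, hpos⟩ := exists_root (S := S) (Finset.card_pos.1 (by omega))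
  have hK : S.card < 2 ^ (Nat.log 2 n + 1) := by
    rw [hS]; exact Nat.lt_pow_succ_log_self (by norm_num) n
  have h1 := (to_star gp rS hpos hE hK).1
  have h2 := (to_star gp rS hpos hE' hK).2
  refine ⟨_, ?_, reaches_trans h1 h2⟩
  have hk1 : 1 ≤ Nat.log 2 n := Nat.log_pos (by norm_num) hn
  have hk1' : (1 : ℝ) ≤ (Nat.log 2 n : ℝ) := by exact_mod_cast hk1
  have hpow : ((2 : ℝ) ^ (Nat.log 2 n)) ≤ n := by
    exact_mod_cast Nat.pow_log_le_self 2 (by omega)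
  have hlog := Real.log_le_log (by positivity) hpow
  rw [Real.log_pow] at hlog
  have : (Nat.log 2 n : ℝ) ≤ Real.log n / Real.log 2 := by rw [le_div_iff₀ hl]; exact hlog
  push_cast
  rw [div_mul_eq_mul_div, mul_div_assoc]
  linarith
end
end

section
/- For every set S of n ≥ 6 points in the plane in convex position, there exist two trees T₁, T₂ ∈ 𝒯(S) such that every sequence of simultaneous rotations transforming T₁ into T₂ has length at least 3. -/
open scoped Classical

noncomputable section

/-- orientation determinant -/
def orr (a b c : Pt) : ℝ := (b.1 - a.1) * (c.2 - a.2) - (b.2 - a.2) * (c.1 - a.1)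

lemma exists_order (S : Finset Pt) (n : ℕ) (hn : 6 ≤ n) (hS : S.card = n) (hg : GenPos S)
    (hc : ConvexPos S) : ∃ p : ℕ → Pt, (∀ i < n, p i ∈ S) ∧ (∀ x ∈ S, ∃ i < n, p i = x) ∧
      ∀ i j k, i < j → j < k → k < n → 0 < orr (p i) (p j) (p k) := by
  have hne : S.Nonempty := by
    rw [← Finset.card_pos]; omega
  obtain ⟨p0, hp0⟩ := hne
  have hcl : IsClosed (convexHull ℝ ((S : Set Pt) \ {p0})) :=
    ((S.finite_toSet.subset Set.sdiff_subset).isCompact_convexHull ℝ).isClosed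
  obtain ⟨f, u, hf1, hf2⟩ := geometric_hahn_banach_point_closed (convex_convexHull ℝ _) hcl (hc p0 hp0)
  set α := f (1, 0) with hα
  set β := f (0, 1) with hβ
  have hfe : ∀ x : Pt, f x = α * x.1 + β * x.2 := by
    intro x
    have : x = x.1 • ((1, 0) : Pt) + x.2 • ((0, 1) : Pt) := by
      ext <;> simp
    conv_lhs => rw [this]
    rw [map_add, map_smul, map_smul]
    simp only [smul_eq_mul]; ring
  let U : Pt → ℝ := fun x => α * (x.1 - p0.1) + β * (x.2 - p0.2)
  let V : Pt → ℝ := fun x => -β * (x.1 - p0.1) + α * (x.2 - p0.2)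
  have hU : ∀ x ∈ S.erase p0, 0 < U x := by
    intro x hx
    have h1 := hf2 x (subset_convexHull ℝ _ ⟨(Finset.mem_erase.1 hx).2, (Finset.mem_erase.1 hx).1⟩)
    rw [hfe] at h1 hf1
    simp only [U]; linarith
  have hcr : ∀ x y, U x * V y - V x * U y = (α ^ 2 + β ^ 2) * orr p0 x y := by
    intro x y; simp only [U, V, orr]; ring
  let key : Pt → ℝ := fun x => V x / U x
  have hAB : 0 < α ^ 2 + β ^ 2 := by
    have hcard : 0 < (S.erase p0).card := by rw [Finset.card_erase_of_mem hp0]; omega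
    obtain ⟨x, hx⟩ := Finset.card_pos.1 hcard
    have := hU x hx
    by_contra hh
    have ha : α = 0 := by nlinarith [sq_nonneg α, sq_nonneg β]
    have hb : β = 0 := by nlinarith [sq_nonneg α, sq_nonneg β]
    simp only [U, ha, hb] at this
    linarith
  have hkey : ∀ x ∈ S.erase p0, ∀ y ∈ S.erase p0, key x < key y → 0 < orr p0 x y := by
    intro x hx y hy h
    have hx' := hU x hx
    have hy' := hU y hy
    simp only [key] at h
    rw [div_lt_div_iff₀ hx' hy'] at h
    have h2 := hcr x y
    by_contra hh
    have : (α ^ 2 + β ^ 2) * orr p0 x y ≤ 0 := mul_nonpos_of_nonneg_of_nonpos hAB.le (not_lt.1 hh)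
    linarith
  have hinj : Set.InjOn key (S.erase p0 : Finset Pt) := by
    intro x hx y hy h
    have hx' := hU x hx
    have hy' := hU y hy
    by_contra hxy
    simp only [key] at h
    rw [div_eq_div_iff hx'.ne' hy'.ne'] at h
    have h2 := hcr x y
    have h0 : orr p0 x y = 0 := by
      have : (α ^ 2 + β ^ 2) * orr p0 x y = 0 := by linarith
      exact (mul_eq_zero.1 this).resolve_left hAB.ne'
    have hx2 := Finset.mem_erase.1 hx
    have hy2 := Finset.mem_erase.1 hy
    refine hg p0 hp0 x hx2.2 y hy2.2 hx2.1.symm hy2.1.symm hxy ?_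
    rw [collinear_iff_of_mem (p₀ := p0) (by simp)]
    have hV : V y = V x * U y / U x := by field_simp; linarith
    refine ⟨x - p0, ?_⟩
    intro q hq
    simp only [Set.mem_insert_iff, Set.mem_singleton_iff] at hq
    rcases hq with rfl | rfl | rfl
    · exact ⟨0, by simp⟩
    · exact ⟨1, by simp⟩
    · refine ⟨U q / U x, ?_⟩
      have e1 : U x * (q.1 - p0.1) = U q * (x.1 - p0.1) := by
        have : U x * (q.1 - p0.1) - U q * (x.1 - p0.1) = -β * orr p0 x q := by
          simp only [U, orr]; ring
        rw [h0] at this; linarith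
      have e2 : U x * (q.2 - p0.2) = U q * (x.2 - p0.2) := by
        have : U x * (q.2 - p0.2) - U q * (x.2 - p0.2) = α * orr p0 x q := by
          simp only [U, orr]; ring
        rw [h0] at this; linarith
      ext
      · simp only [vadd_eq_add, Prod.fst_add, Prod.smul_fst, Prod.fst_sub, smul_eq_mul]
        rw [div_mul_eq_mul_div, ← e1, mul_div_cancel_left₀ _ hx'.ne']; ring
      · simp only [vadd_eq_add, Prod.snd_add, Prod.smul_snd, Prod.snd_sub, smul_eq_mul]
        rw [div_mul_eq_mul_div, ← e2, mul_div_cancel_left₀ _ hx'.ne']; ring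
  have hKc : ((S.erase p0).image key).card = n - 1 := by
    rw [Finset.card_image_of_injOn hinj, Finset.card_erase_of_mem hp0, hS]
  let e := ((S.erase p0).image key).orderEmbOfFin hKc
  have hq : ∀ i : Fin (n - 1), ∃ x ∈ S.erase p0, key x = e i := fun i =>
    Finset.mem_image.1 (Finset.orderEmbOfFin_mem _ hKc i)
  choose q hqS hqk using hq
  let p : ℕ → Pt := fun i => if h : 0 < i ∧ i < n then q ⟨i - 1, by omega⟩ else p0
  have hp_0 : p 0 = p0 := by simp [p]
  have hp_s : ∀ i, 0 < i → i < n → p i ∈ S.erase p0 := by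
    intro i h1 h2
    simp only [p, dif_pos (And.intro h1 h2)]; exact hqS _
  have hp_k : ∀ i j, 0 < i → i < j → j < n → 0 < orr p0 (p i) (p j) := by
    intro i j h1 h2 h3
    refine hkey _ (hp_s i h1 (by omega)) _ (hp_s j (by omega) h3) ?_
    have a1 : 0 < i ∧ i < n := by omega
    have a2 : 0 < j ∧ j < n := by omega
    simp only [p, dif_pos a1, dif_pos a2, hqk]
    apply e.strictMono
    simp only [Fin.mk_lt_mk]; omega
  refine ⟨p, ?_, ?_, ?_⟩
  · intro i hi
    rcases Nat.eq_zero_or_pos i with rfl | h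
    · rw [hp_0]; exact hp0
    · exact (Finset.mem_erase.1 (hp_s i h hi)).2
  · intro x hx
    by_cases hx0 : x = p0
    · exact ⟨0, by omega, by rw [hp_0, hx0]⟩
    · have hxe : x ∈ S.erase p0 := Finset.mem_erase.2 ⟨hx0, hx⟩
      have : key x ∈ Set.range e := by
        rw [Finset.range_orderEmbOfFin]
        exact Finset.mem_coe.2 (Finset.mem_image_of_mem _ hxe)
      obtain ⟨i, hi⟩ := this
      refine ⟨i.1 + 1, by omega, ?_⟩
      have a1 : 0 < i.1 + 1 ∧ i.1 + 1 < n := by omega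
      simp only [p, dif_pos a1]
      apply hinj (hqS _) hxe
      rw [hqk, ← hi]; rfl
  · intro i j k hij hjk hk
    rcases Nat.eq_zero_or_pos i with rfl | h
    · rw [hp_0]; exact hp_k j k hij hjk hk
    have c1 := hp_k i j h hij (by omega)
    have c2 := hp_k j k (by omega) hjk hk
    have c3 := hp_k i k h (by omega) hk
    by_contra hneg
    have si := Finset.mem_erase.1 (hp_s i h (by omega))
    have sj := Finset.mem_erase.1 (hp_s j (by omega) (by omega))
    have sk := Finset.mem_erase.1 (hp_s k (by omega) hk)
    have nij : p i ≠ p j := by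
      intro hh; rw [hh] at c1; simp only [orr] at c1; nlinarith
    have njk : p k ≠ p j := by
      intro hh; rw [hh] at c2; simp only [orr] at c2; nlinarith
    refine hc (p j) sj.2 ?_
    have hcv := convex_convexHull ℝ ((S : Set Pt) \ {p j})
    have m0 : p0 ∈ convexHull ℝ ((S : Set Pt) \ {p j}) :=
      subset_convexHull ℝ _ ⟨hp0, fun hh => sj.1 (by simpa using hh.symm)⟩
    have mi : p i ∈ convexHull ℝ ((S : Set Pt) \ {p j}) :=
      subset_convexHull ℝ _ ⟨si.2, by simpa using nij⟩
    have mk : p k ∈ convexHull ℝ ((S : Set Pt) \ {p j}) :=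
      subset_convexHull ℝ _ ⟨sk.2, by simpa using njk⟩
    have hsum : orr (p i) (p j) (p k) = orr p0 (p i) (p j) + orr p0 (p j) (p k)
        - orr p0 (p i) (p k) := by simp only [orr]; ring
    generalize hA : orr p0 (p i) (p j) = A at *
    generalize hB : orr p0 (p j) (p k) = B at *
    generalize hC : orr p0 (p i) (p k) = C at *
    have key3 : p j = (B / C) • p i + (A / C) • p k + ((C - A - B) / C) • p0 := by
      have e1 : C * (p j).1 = B * (p i).1 + A * (p k).1 + (C - A - B) * p0.1 := by
        rw [← hA, ← hB, ← hC]; simp only [orr]; ring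
      have e2 : C * (p j).2 = B * (p i).2 + A * (p k).2 + (C - A - B) * p0.2 := by
        rw [← hA, ← hB, ← hC]; simp only [orr]; ring
      ext
      · simp only [Prod.fst_add, Prod.smul_fst, smul_eq_mul]
        field_simp; linarith
      · simp only [Prod.snd_add, Prod.smul_snd, smul_eq_mul]
        field_simp; linarith
    have hz : 0 ≤ C - A - B := by linarith
    have := hcv.sum_mem (t := Finset.univ) (w := ![B / C, A / C, (C - A - B) / C])
      (z := ![p i, p k, p0]) (by
        intro x _; fin_cases x
        · exact (div_pos c2 c3).le
        · exact (div_pos c1 c3).le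
        · exact div_nonneg hz c3.le)
      (by simp [Fin.sum_univ_three]; field_simp; ring)
      (by intro x _; fin_cases x <;> simpa)
    simp [Fin.sum_univ_three] at this
    rw [← key3] at this
    exact this

/-- if `c,d` lie weakly on one side of line `ab` -/
lemma noCross_side (σ : ℝ) (a b c d : Pt)
    (hc : 0 < σ * orr a b c ∨ c = a ∨ c = b) (hd : 0 < σ * orr a b d ∨ d = a ∨ d = b)
    (hcd : 0 < σ * orr a b c ∨ 0 < σ * orr a b d) : NoCrossPair s(a, b) s(c, d) := by
  have oa : orr a b a = 0 := by simp [orr]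
  have ob : orr a b b = 0 := by simp only [orr]; ring
  rintro x ⟨h1, h2⟩
  obtain ⟨s, t, hs, ht, hst, rfl⟩ : x ∈ segment ℝ a b := h1
  obtain ⟨s', t', hs', ht', hst', hx⟩ : s • a + t • b ∈ segment ℝ c d := h2
  have hlin : ∀ y z : Pt, ∀ r w : ℝ, r + w = 1 →
      orr a b (r • y + w • z) = r * orr a b y + w * orr a b z := by
    intro y z r w hrw
    have : r = 1 - w := by linarith
    subst this
    simp only [orr, Prod.fst_add, Prod.snd_add, Prod.smul_fst, Prod.smul_snd, smul_eq_mul]; ring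
  have z1 : orr a b (s • a + t • b) = 0 := by rw [hlin _ _ _ _ hst, oa, ob]; ring
  rw [← hx, hlin _ _ _ _ hst'] at z1
  have z2 : s' * (σ * orr a b c) + t' * (σ * orr a b d) = 0 := by linear_combination σ * z1
  have hc0 : 0 ≤ σ * orr a b c := by
    rcases hc with h | rfl | rfl
    · exact h.le
    · rw [oa]; simp
    · rw [ob]; simp
  have hd0 : 0 ≤ σ * orr a b d := by
    rcases hd with h | rfl | rfl
    · exact h.le
    · rw [oa]; simp
    · rw [ob]; simp
  have n1 := mul_nonneg hs' hc0
  have n2 := mul_nonneg ht' hd0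
  rw [← hx]
  have ez1 : s' * (σ * orr a b c) = 0 := by linarith
  have ez2 : t' * (σ * orr a b d) = 0 := by linarith
  by_cases hcp : 0 < σ * orr a b c
  · have s0 : s' = 0 := (mul_eq_zero.1 ez1).resolve_right hcp.ne'
    have t1 : t' = 1 := by linarith
    subst s0 t1
    have hd1 : d = a ∨ d = b := by
      refine hd.resolve_left (fun h => ?_)
      linarith
    simp only [zero_smul, one_smul, zero_add]
    exact ⟨by simpa [epts] using hd1, by simp [epts]⟩
  · have hdp := hcd.resolve_left hcp
    have t0 : t' = 0 := (mul_eq_zero.1 ez2).resolve_right hdp.ne'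
    have s1 : s' = 1 := by linarith
    subst t0 s1
    have hc1 := hc.resolve_left hcp
    simp only [zero_smul, one_smul, add_zero]
    exact ⟨by simpa [epts] using hc1, by simp [epts]⟩

lemma orr_swap (a b c : Pt) : orr a c b = - orr a b c := by simp only [orr]; ring
lemma orr_rot (a b c : Pt) : orr b c a = orr a b c := by simp only [orr]; ring

lemma noCross_idx (n : ℕ) (p : ℕ → Pt)
    (hp : ∀ i j k, i < j → j < k → k < n → 0 < orr (p i) (p j) (p k))
    (i j k l : ℕ) (hij : i < j) (hj : j < n) (hkl : k < l) (hl : l < n)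
    (h1 : ¬ (i < k ∧ k < j ∧ j < l)) (h2 : ¬ (k < i ∧ i < l ∧ l < j)) (h3 : ¬ (i = k ∧ j = l)) :
    NoCrossPair s(p i, p j) s(p k, p l) := by
  have hin : ∀ m, i < m → m < j → 0 < (-1) * orr (p i) (p j) (p m) := by
    intro m a b
    rw [orr_swap]; linarith [hp i m j a b hj]
  have hlo : ∀ m, m < i → 0 < 1 * orr (p i) (p j) (p m) := by
    intro m a
    rw [orr_rot]; linarith [hp m i j a hij hj]
  have hhi : ∀ m, j < m → m < n → 0 < 1 * orr (p i) (p j) (p m) := by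
    intro m a b
    linarith [hp i j m hij a b]
  by_cases hc : i ≤ k ∧ l ≤ j
  · have gen : ∀ m, i ≤ m → m ≤ j → 0 < (-1) * orr (p i) (p j) (p m) ∨ p m = p i ∨ p m = p j := by
      intro m a b
      rcases eq_or_lt_of_le a with rfl | a'
      · simp
      rcases eq_or_lt_of_le b with rfl | b'
      · simp
      exact Or.inl (hin m a' b')
    refine noCross_side (-1) _ _ _ _ (gen k (by omega) (by omega)) (gen l (by omega) (by omega)) ?_
    by_cases hk : i < k
    · exact Or.inl (hin k hk (by omega))
    · exact Or.inr (hin l (by omega) (by omega))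
  · have gen : ∀ m, m < n → (m ≤ i ∨ j ≤ m) → 0 < 1 * orr (p i) (p j) (p m) ∨ p m = p i ∨ p m = p j := by
      intro m hm a
      rcases a with a | a
      · rcases eq_or_lt_of_le a with rfl | a'
        · simp
        · exact Or.inl (hlo m a')
      · rcases eq_or_lt_of_le a with rfl | a'
        · simp
        · exact Or.inl (hhi m a' hm)
    refine noCross_side 1 _ _ _ _ (gen k (by omega) (by omega)) (gen l (by omega) (by omega)) ?_
    by_cases hk : k < i
    · exact Or.inl (hlo k hk)
    by_cases hk' : j < k
    · exact Or.inl (hhi k hk' (by omega))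
    · exact Or.inr (hhi l (by omega) (by omega))

lemma cross_pts (a b c d : Pt) (h1 : 0 < orr a b c) (h2 : 0 < orr a b d) (h3 : 0 < orr a c d)
    (h4 : 0 < orr b c d) : ∃ x, x ∈ segment ℝ a c ∧ x ∈ segment ℝ b d ∧ x ≠ a ∧ x ≠ c := by
  have hs : orr a b c + orr a c d = orr a b d + orr b c d := by simp only [orr]; ring
  have hD : 0 < orr a b c + orr a c d := by linarith
  have ne1 : orr a b d / (orr a b c + orr a c d) ≠ 0 := (div_pos h2 hD).ne'
  have ne2 : orr b c d / (orr a b c + orr a c d) ≠ 0 := (div_pos h4 hD).ne'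
  have sum1 : orr b c d / (orr a b c + orr a c d) + orr a b d / (orr a b c + orr a c d) = 1 := by
    rw [← add_div, div_eq_one_iff_eq hD.ne']; linarith
  have sum2 : orr a c d / (orr a b c + orr a c d) + orr a b c / (orr a b c + orr a c d) = 1 := by
    rw [← add_div, div_eq_one_iff_eq hD.ne']; linarith
  have hac : a ≠ c := by
    rintro rfl; simp only [orr] at h1; nlinarith
  refine ⟨(orr b c d / (orr a b c + orr a c d)) • a + (orr a b d / (orr a b c + orr a c d)) • c,
    ⟨_, _, (div_pos h4 hD).le, (div_pos h2 hD).le, sum1, rfl⟩,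
    ⟨_, _, (div_pos h3 hD).le, (div_pos h1 hD).le, sum2, ?_⟩, ?_, ?_⟩
  · ext
    · simp only [Prod.fst_add, Prod.smul_fst, smul_eq_mul]
      field_simp
      simp only [orr]; ring
    · simp only [Prod.snd_add, Prod.smul_snd, smul_eq_mul]
      field_simp
      simp only [orr]; ring
  · intro h
    have e0 : (orr a b d / (orr a b c + orr a c d)) • (c - a) = 0 := by
      have : orr b c d / (orr a b c + orr a c d) = 1 - orr a b d / (orr a b c + orr a c d) := by
        linarith
      rw [this] at h
      rw [smul_sub]
      rw [sub_smul, one_smul] at h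
      rw [← sub_eq_zero] at h
      rw [← h]; abel
    rcases smul_eq_zero.1 e0 with h | h
    · exact ne1 h
    · exact hac (sub_eq_zero.1 h).symm
  · intro h
    have e0 : (orr b c d / (orr a b c + orr a c d)) • (a - c) = 0 := by
      have : orr a b d / (orr a b c + orr a c d) = 1 - orr b c d / (orr a b c + orr a c d) := by
        linarith
      rw [this] at h
      rw [smul_sub]
      rw [sub_smul, one_smul] at h
      rw [← sub_eq_zero] at h
      rw [← h]; abel
    rcases smul_eq_zero.1 e0 with h | h
    · exact ne2 h
    · exact hac (sub_eq_zero.1 h)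

lemma cross_idx (n : ℕ) (p : ℕ → Pt)
    (hp : ∀ i j k, i < j → j < k → k < n → 0 < orr (p i) (p j) (p k))
    (i j k l : ℕ) (hij : i < j) (hjk : j < k) (hkl : k < l) (hl : l < n) :
    ¬ NoCrossPair s(p i, p k) s(p j, p l) ∧ ¬ NoCrossPair s(p j, p l) s(p i, p k) := by
  obtain ⟨x, hx1, hx2, n1, n2⟩ := cross_pts (p i) (p j) (p k) (p l)
    (hp _ _ _ hij hjk (by omega)) (hp _ _ _ hij (by omega) hl) (hp _ _ _ (by omega) hkl hl)
    (hp _ _ _ hjk hkl hl)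
  constructor
  · intro h
    have := (h ⟨hx1, hx2⟩).1
    simp only [epts, Set.mem_ofPred_eq, Sym2.mem_iff] at this
    tauto
  · intro h
    have := (h ⟨hx2, hx1⟩).2
    simp only [epts, Set.mem_ofPred_eq, Sym2.mem_iff] at this
    tauto

lemma mkPST (S : Finset Pt) (n : ℕ) (hn : 6 ≤ n) (hS : S.card = n) (p : ℕ → Pt)
    (hpS : ∀ i < n, p i ∈ S) (hsur : ∀ x ∈ S, ∃ i < n, p i = x)
    (hp : ∀ i j k, i < j → j < k → k < n → 0 < orr (p i) (p j) (p k))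
    (hinj : ∀ i < n, ∀ j < n, p i = p j → i = j)
    (lo hi : ℕ → ℕ) (h1 : ∀ k, 1 ≤ k → k < n → lo k < hi k ∧ hi k < n)
    (h2 : ∀ k l, 1 ≤ k → k < n → 1 ≤ l → l < n → k ≠ l →
      ¬ (lo k < lo l ∧ lo l < hi k ∧ hi k < hi l) ∧ ¬ (lo k = lo l ∧ hi k = hi l))
    (hcon : ∀ k, k < n → Relation.ReflTransGen
      (fun a b => s(a, b) ∈ (Finset.Ico 1 n).image (fun k => s(p (lo k), p (hi k)))) (p k) (p 0)) :
    IsPST S ((Finset.Ico 1 n).image (fun k => s(p (lo k), p (hi k)))) := by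
  refine ⟨?_, ?_, ?_, ?_⟩
  · intro e he
    obtain ⟨k, hk, rfl⟩ := Finset.mem_image.1 he
    rw [Finset.mem_Ico] at hk
    have := h1 k hk.1 hk.2
    constructor
    · rw [Sym2.mk_isDiag_iff]
      intro h
      have := hinj _ (by omega) _ (by omega) h
      omega
    · intro q hq
      rcases Sym2.mem_iff.1 hq with rfl | rfl
      · exact hpS _ (by omega)
      · exact hpS _ (by omega)
  · intro e he f hf hef
    obtain ⟨k, hk, rfl⟩ := Finset.mem_image.1 he
    obtain ⟨l, hl, rfl⟩ := Finset.mem_image.1 hf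
    rw [Finset.mem_Ico] at hk hl
    have a := h1 k hk.1 hk.2
    have b := h1 l hl.1 hl.2
    have hkl : k ≠ l := by rintro rfl; exact hef rfl
    have c := h2 k l hk.1 hk.2 hl.1 hl.2 hkl
    have d := h2 l k hl.1 hl.2 hk.1 hk.2 hkl.symm
    exact noCross_idx n p hp _ _ _ _ a.1 a.2 b.1 b.2 c.1 d.1 c.2
  · rw [Finset.card_image_of_injOn, Nat.card_Ico]
    · omega
    · intro k hk l hl hkl
      rw [Finset.mem_coe, Finset.mem_Ico] at hk hl
      have a := h1 k hk.1 hk.2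
      have b := h1 l hl.1 hl.2
      by_contra hne
      have c := h2 k l hk.1 hk.2 hl.1 hl.2 hne
      have hkl' : s(p (lo k), p (hi k)) = s(p (lo l), p (hi l)) := hkl
      rw [Sym2.eq_iff] at hkl'
      rcases hkl' with ⟨x, y⟩ | ⟨x, y⟩
      · exact c.2 ⟨hinj _ (by omega) _ (by omega) x, hinj _ (by omega) _ (by omega) y⟩
      · have := hinj _ (by omega) _ (by omega) x
        have := hinj _ (by omega) _ (by omega) y
        omega
  · intro x hx y hy
    obtain ⟨i, hi', rfl⟩ := hsur x hx
    obtain ⟨j, hj', rfl⟩ := hsur y hy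
    refine (hcon i hi').trans ?_
    have gen : ∀ a b, Relation.ReflTransGen (fun a b => s(a, b) ∈ (Finset.Ico 1 n).image
        (fun k => s(p (lo k), p (hi k)))) a b → Relation.ReflTransGen (fun a b => s(a, b) ∈
        (Finset.Ico 1 n).image (fun k => s(p (lo k), p (hi k)))) b a := by
      intro a b h
      induction h with
      | refl => exact .refl
      | tail _ h2 ih =>
        refine .head ?_ ih
        rw [Sym2.eq_swap]; exact h2
    exact gen _ _ (hcon j hj')

def lo1 (k : ℕ) : ℕ := if k = 4 ∨ k = 5 then 3 else 0
def lo2 (k : ℕ) : ℕ := if k = 1 then 0 else if k = 2 ∨ k = 4 then 1 else if k = 3 then 3 else 4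
def hi2 (k : ℕ) : ℕ := if k = 3 then 4 else k

lemma no_final (S : Finset Pt) (n : ℕ) (hn : 6 ≤ n) (p : ℕ → Pt)
    (hsur : ∀ x ∈ S, ∃ i < n, p i = x)
    (hp : ∀ i j k, i < j → j < k → k < n → 0 < orr (p i) (p j) (p k))
    (hinj : ∀ i < n, ∀ j < n, p i = p j → i = j)
    (E₁ E₂ T : Finset (Sym2 Pt)) (m1 : s(p 0, p 2) ∈ E₁) (m2 : s(p 3, p 5) ∈ E₁)
    (q1 : s(p 0, p 1) ∈ E₂) (q2 : s(p 1, p 2) ∈ E₂) (q3 : s(p 3, p 4) ∈ E₂) (q4 : s(p 4, p 5) ∈ E₂)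
    (q5 : s(p 1, p 4) ∈ E₂) (hT : ∀ e ∈ T, ∀ f ∈ E₁, e = f ∨ NoCrossPair e f) :
    ¬ E₂ = T ∧ ¬ SimRotation S T E₂ := by
  have hne : ∀ i j k l, i < n → j < n → k < n → l < n → i ≠ k → i ≠ l →
      s(p i, p j) ≠ s(p k, p l) := by
    intro i j k l hi hj hk hl a b h
    rw [Sym2.eq_iff] at h
    rcases h with h | h
    · exact a (hinj _ hi _ hk h.1)
    · exact b (hinj _ hi _ hl h.1)
  have h14 : s(p 1, p 4) ∉ T := by
    intro h
    rcases hT _ h _ m1 with h | h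
    · exact hne 1 4 0 2 (by omega) (by omega) (by omega) (by omega) (by omega) (by omega) h
    · exact (cross_idx n p hp 0 1 2 4 (by omega) (by omega) (by omega) (by omega)).2 h
  refine ⟨fun h => h14 (h ▸ q5), ?_⟩
  rintro ⟨hTP, -, π, hπ, hπ2⟩
  obtain ⟨e, he, hee⟩ := hπ.surjOn (show s(p 1, p 4) ∈ (↑(E₂ \ T) : Set (Sym2 Pt)) by
    rw [Finset.mem_coe, Finset.mem_sdiff]; exact ⟨q5, h14⟩)
  rw [Finset.mem_coe] at he
  obtain ⟨⟨x, hx1, hx2⟩, -⟩ := hπ2 e he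
  rw [Finset.mem_sdiff] at he
  rw [hee] at hx2
  obtain ⟨y, rfl⟩ := hx1
  have hd := hTP.1 _ he.1
  obtain ⟨j, hj, rfl⟩ := hsur y (hd.2 y (by simp))
  rcases Sym2.mem_iff.1 hx2 with rfl | rfl
  · have j1 : j ≠ 1 := by
      rintro rfl; exact hd.1 (by simp)
    have j0 : j ≠ 0 := by
      rintro rfl; exact he.2 (by rw [Sym2.eq_swap]; exact q1)
    have j2 : j ≠ 2 := by
      rintro rfl; exact he.2 q2
    rcases hT _ he.1 _ m1 with h | h
    · exact hne 1 j 0 2 (by omega) (by omega) (by omega) (by omega) (by omega) (by omega) h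
    · exact (cross_idx n p hp 0 1 2 j (by omega) (by omega) (by omega) (by omega)).2 h
  · have j1 : j ≠ 4 := by
      rintro rfl; exact hd.1 (by simp)
    have j0 : j ≠ 3 := by
      rintro rfl; exact he.2 (by rw [Sym2.eq_swap]; exact q3)
    have j2 : j ≠ 5 := by
      rintro rfl; exact he.2 q4
    rcases hT _ he.1 _ m2 with h | h
    · exact hne 4 j 3 5 (by omega) (by omega) (by omega) (by omega) (by omega) (by omega) h
    · by_cases hj3 : j < 3
      · rw [Sym2.eq_swap] at h
        exact (cross_idx n p hp j 3 4 5 (by omega) (by omega) (by omega) (by omega)).1 h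
      · exact (cross_idx n p hp 3 4 5 j (by omega) (by omega) (by omega) (by omega)).2 h

/-- on `n ≥ 6` points in convex position there are two trees at simultaneous
rotation distance at least `3`. -/
theorem stmt_1 :
    ∀ n : ℕ, 6 ≤ n → ∀ S : Finset Pt, S.card = n → GenPos S → ConvexPos S →
      ∃ E₁ E₂ : Finset (Sym2 Pt), IsPST S E₁ ∧ IsPST S E₂ ∧
        ∀ (k : ℕ) (f : ℕ → Finset (Sym2 Pt)), f 0 = E₁ → f k = E₂ →
          (∀ i < k, SimRotation S (f i) (f (i + 1))) → 3 ≤ k := by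
  intro n hn S hS hg hc
  obtain ⟨p, hpS, hsur, hp⟩ := exists_order S n hn hS hg hc
  have hinj : ∀ i < n, ∀ j < n, p i = p j → i = j := by
    have hmap : Set.InjOn p (Finset.range n : Finset ℕ) := by
      apply Finset.injOn_of_surjOn_of_card_le (t := S)
      · intro i hi; exact hpS i (by simpa using hi)
      · intro x hx
        obtain ⟨i, hi, rfl⟩ := hsur x hx
        exact ⟨i, by simpa using hi, rfl⟩
      · simp [hS]
    intro i hi j hj h
    exact hmap (by simpa using hi) (by simpa using hj) h
  have hE1 : ∀ k, 1 ≤ k → k < n →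
      s(p (lo1 k), p (id k)) ∈ (Finset.Ico 1 n).image (fun k => s(p (lo1 k), p (id k))) :=
    fun k h1 h2 => Finset.mem_image.2 ⟨k, Finset.mem_Ico.2 ⟨h1, h2⟩, rfl⟩
  have hE2 : ∀ k, 1 ≤ k → k < n →
      s(p (lo2 k), p (hi2 k)) ∈ (Finset.Ico 1 n).image (fun k => s(p (lo2 k), p (hi2 k))) :=
    fun k h1 h2 => Finset.mem_image.2 ⟨k, Finset.mem_Ico.2 ⟨h1, h2⟩, rfl⟩
  have P1 := mkPST S n hn hS p hpS hsur hp hinj lo1 id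
    (by intro k h1 h2; simp only [lo1, id]; split_ifs <;> omega)
    (by intro k l h1 h2 h3 h4 h5; simp only [lo1, id]; split_ifs <;> omega)
    (by
      have base : ∀ k, k < n → k ≠ 4 → k ≠ 5 → Relation.ReflTransGen
          (fun a b => s(a, b) ∈ (Finset.Ico 1 n).image (fun k => s(p (lo1 k), p (id k))))
          (p k) (p 0) := by
        intro k hk h4 h5
        rcases Nat.eq_zero_or_pos k with rfl | h
        · exact .refl
        · refine .single ?_
          have := hE1 k h hk
          rw [show lo1 k = 0 by simp [lo1, h4, h5], Sym2.eq_swap] at this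
          exact this
      intro k hk
      by_cases hh : k = 4 ∨ k = 5
      · refine .head ?_ (base 3 (by omega) (by omega) (by omega))
        have := hE1 k (by omega) hk
        rw [show lo1 k = 3 by simp [lo1, hh], Sym2.eq_swap] at this
        exact this
      · exact base k hk (by tauto) (by tauto))
  have P2 := mkPST S n hn hS p hpS hsur hp hinj lo2 hi2
    (by intro k h1 h2; simp only [lo2, hi2]; split_ifs <;> omega)
    (by intro k l h1 h2 h3 h4 h5; simp only [lo2, hi2]; split_ifs <;> omega)
    (by
      have b1 : Relation.ReflTransGen
          (fun a b => s(a, b) ∈ (Finset.Ico 1 n).image (fun k => s(p (lo2 k), p (hi2 k))))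
          (p 1) (p 0) := by
        refine .single ?_
        have := hE2 1 (by omega) (by omega)
        rw [Sym2.eq_swap] at this
        exact this
      have b4 : Relation.ReflTransGen
          (fun a b => s(a, b) ∈ (Finset.Ico 1 n).image (fun k => s(p (lo2 k), p (hi2 k))))
          (p 4) (p 0) := by
        refine .head ?_ b1
        have := hE2 4 (by omega) (by omega)
        rw [Sym2.eq_swap] at this
        exact this
      intro k hk
      by_cases k0 : k = 0
      · subst k0; exact .refl
      by_cases k1 : k = 1
      · subst k1; exact b1
      by_cases k2 : k = 2
      · subst k2
        refine .head ?_ b1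
        have := hE2 2 (by omega) (by omega)
        rw [Sym2.eq_swap] at this
        exact this
      by_cases k3 : k = 3
      · subst k3
        refine .head ?_ b4
        exact hE2 3 (by omega) (by omega)
      by_cases k4 : k = 4
      · subst k4; exact b4
      refine .head ?_ b4
      have := hE2 k (by omega) hk
      rw [show lo2 k = 4 by simp [lo2, k1, k2, k3, k4], show hi2 k = k by simp [hi2, k3],
        Sym2.eq_swap] at this
      exact this)
  have key := fun T => no_final S n hn p hsur hp hinj _ _ T (hE1 2 (by omega) (by omega))
    (hE1 5 (by omega) (by omega)) (hE2 1 (by omega) (by omega)) (hE2 2 (by omega) (by omega))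
    (hE2 3 (by omega) (by omega)) (hE2 5 (by omega) (by omega)) (hE2 4 (by omega) (by omega))
  have self : ∀ e ∈ (Finset.Ico 1 n).image (fun k => s(p (lo1 k), p (id k))),
      ∀ f ∈ (Finset.Ico 1 n).image (fun k => s(p (lo1 k), p (id k))),
      e = f ∨ NoCrossPair e f := by
    intro e he f hf
    by_cases h : e = f
    · exact Or.inl h
    · exact Or.inr (P1.2.1 e he f hf h)
  refine ⟨_, _, P1, P2, ?_⟩
  intro k f h0 hk hstep
  by_contra hlt
  have hk3 : k = 0 ∨ k = 1 ∨ k = 2 := by omega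
  rcases hk3 with rfl | rfl | rfl
  · exact (key _ self).1 (hk.symm.trans h0)
  · have := hstep 0 (by omega)
    rw [h0, zero_add, hk] at this
    exact (key _ self).2 this
  · have s1 := hstep 0 (by omega)
    have s2 := hstep 1 (by omega)
    rw [h0, zero_add] at s1
    rw [show 1 + 1 = 2 from rfl, hk] at s2
    refine (key (f 1) ?_).2 s2
    obtain ⟨-, -, π, hπ, hπ2⟩ := s1
    intro e he g hg'
    by_cases hm : e ∈ (Finset.Ico 1 n).image (fun k => s(p (lo1 k), p (id k)))
    · exact self e hm g hg'
    · obtain ⟨e', he', rfl⟩ := hπ.surjOn (Finset.mem_coe.2 (Finset.mem_sdiff.2 ⟨he, hm⟩))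
      exact Or.inr ((hπ2 e' (Finset.mem_coe.1 he')).2 g hg')
end
end

section
/- Let S be a finite set of points in the plane in general position and let T = (S,E) ∈ 𝒯(S). Suppose p, q, r ∈ S are such that pq ∈ E and the interior of the triangle Δ(pqr) does not intersect any edge of T. Then at least one of the graphs (S, E ∖ {pq} ∪ {pr}) and (S, E ∖ {pq} ∪ {qr}) is again a noncrossing straight-line spanning tree in 𝒯(S); in particular, an empty-triangle rotation can replace pq with either pr or qr. -/
open scoped Classical

noncomputable section

def crs (u v w : Pt) : ℝ := (v.1 - u.1) * (w.2 - u.2) - (v.2 - u.2) * (w.1 - u.1)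

lemma collinear_of_crs {a q r : Pt} (hqr : q ≠ r) (h : crs a q r = 0) :
    Collinear ℝ ({a, q, r} : Set Pt) := by
  rw [collinear_iff_of_mem (p₀ := q) (by simp)]
  refine ⟨r - q, ?_⟩
  unfold crs at h
  have hN : 0 < (r.1 - q.1) ^ 2 + (r.2 - q.2) ^ 2 := by
    by_contra hc
    push Not at hc
    apply hqr
    have h1 : r.1 - q.1 = 0 := by nlinarith [sq_nonneg (r.1 - q.1), sq_nonneg (r.2 - q.2)]
    have h2 : r.2 - q.2 = 0 := by nlinarith [sq_nonneg (r.1 - q.1), sq_nonneg (r.2 - q.2)]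
    ext <;> linarith
  intro x hx
  simp only [Set.mem_insert_iff, Set.mem_singleton_iff] at hx
  rcases hx with rfl | rfl | rfl
  · refine ⟨((x.1 - q.1) * (r.1 - q.1) + (x.2 - q.2) * (r.2 - q.2)) /
      ((r.1 - q.1) ^ 2 + (r.2 - q.2) ^ 2), ?_⟩
    ext
    · simp
      field_simp
      linear_combination (-(r.2 - q.2)) * h
    · simp
      field_simp
      linear_combination (r.1 - q.1) * h
  · exact ⟨0, by simp⟩
  · exact ⟨1, by simp⟩

lemma mem_triInt {p q r y : Pt}
    (h1 : 0 < crs y q r * crs p q r) (h2 : 0 < crs p y r * crs p q r)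
    (h3 : 0 < crs p q y * crs p q r) : y ∈ triInt p q r := by
  have hD : crs p q r ≠ 0 := by
    rintro h; rw [h] at h1; simp at h1
  have hsub : {y : Pt | 0 < crs y q r * crs p q r ∧ 0 < crs p y r * crs p q r ∧
      0 < crs p q y * crs p q r} ⊆ convexHull ℝ ({p, q, r} : Set Pt) := by
    rintro z ⟨z1, z2, z3⟩
    have hD2 : 0 < crs p q r * crs p q r := mul_self_pos.2 hD
    have e1 : 0 ≤ crs z q r / crs p q r := by
      rw [← mul_div_mul_right _ _ hD]; positivity
    have e2 : 0 ≤ crs p z r / crs p q r := by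
      rw [← mul_div_mul_right _ _ hD]; positivity
    have e3 : 0 ≤ crs p q z / crs p q r := by
      rw [← mul_div_mul_right _ _ hD]; positivity
    have hs : crs z q r / crs p q r + crs p z r / crs p q r + crs p q z / crs p q r = 1 := by
      field_simp
      unfold crs; ring
    have hz : z = (crs z q r / crs p q r) • p + (crs p z r / crs p q r) • q +
        (crs p q z / crs p q r) • r := by
      ext
      · simp
        field_simp
        unfold crs; ring
      · simp
        field_simp
        unfold crs; ring
    have hc := convex_convexHull ℝ ({p, q, r} : Set Pt)
    have hp : p ∈ convexHull ℝ ({p, q, r} : Set Pt) := subset_convexHull ℝ _ (by simp)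
    have hq : q ∈ convexHull ℝ ({p, q, r} : Set Pt) := subset_convexHull ℝ _ (by simp)
    have hr : r ∈ convexHull ℝ ({p, q, r} : Set Pt) := subset_convexHull ℝ _ (by simp)
    have := hc.sum_mem (t := Finset.univ) (w := ![crs z q r / crs p q r, crs p z r / crs p q r,
      crs p q z / crs p q r]) (z := ![p, q, r])
      (by intro i _; fin_cases i <;> simpa) (by simpa [Fin.sum_univ_three] using hs)
      (by intro i _; fin_cases i <;> simpa)
    simp only [Fin.sum_univ_three] at this
    rw [hz]
    exact this
  refine interior_maximal hsub ?_ ⟨h1, h2, h3⟩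
  have o1 : IsOpen {y : Pt | 0 < crs y q r * crs p q r} :=
    isOpen_lt continuous_const (by unfold crs; fun_prop)
  have o2 : IsOpen {y : Pt | 0 < crs p y r * crs p q r} :=
    isOpen_lt continuous_const (by unfold crs; fun_prop)
  have o3 : IsOpen {y : Pt | 0 < crs p q y * crs p q r} :=
    isOpen_lt continuous_const (by unfold crs; fun_prop)
  exact o1.inter (o2.inter o3)

lemma push_in {p q r a b x : Pt} {t : ℝ} (ht0 : 0 < t) (ht1 : t < 1)
    (hx : x = (1 - t) • q + t • r) (hxf : x ∈ segment ℝ a b)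
    (ha : 0 < crs a q r * crs p q r) (hd : Disjoint (segment ℝ a b) (triInt p q r)) : False := by
  have hD : crs p q r ≠ 0 := by
    rintro h; rw [h] at ha; simp at ha
  have hD2 : 0 < crs p q r * crs p q r := mul_self_pos.2 hD
  have c2 : 0 < crs p x r * crs p q r := by
    have : crs p x r * crs p q r = (1 - t) * (crs p q r * crs p q r) := by
      subst hx; simp [crs]; ring
    rw [this]; exact mul_pos (by linarith) hD2
  have c3 : 0 < crs p q x * crs p q r := by
    have : crs p q x * crs p q r = t * (crs p q r * crs p q r) := by
      subst hx; simp [crs]; ring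
    rw [this]; positivity
  have k2 : Continuous (fun ε : ℝ => crs p (x + ε • (a - x)) r * crs p q r) := by
    unfold crs; fun_prop
  have k3 : Continuous (fun ε : ℝ => crs p q (x + ε • (a - x)) * crs p q r) := by
    unfold crs; fun_prop
  have e2 : ∀ᶠ ε in nhdsWithin (0 : ℝ) (Set.Ioi 0),
      0 < crs p (x + ε • (a - x)) r * crs p q r :=
    nhdsWithin_le_nhds (k2.continuousAt.eventually (lt_mem_nhds (by simpa using c2)))
  have e3 : ∀ᶠ ε in nhdsWithin (0 : ℝ) (Set.Ioi 0),
      0 < crs p q (x + ε • (a - x)) * crs p q r :=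
    nhdsWithin_le_nhds (k3.continuousAt.eventually (lt_mem_nhds (by simpa using c3)))
  have e1 : ∀ᶠ ε in nhdsWithin (0 : ℝ) (Set.Ioi 0), ε ∈ Set.Ioo (0 : ℝ) 1 :=
    Ioo_mem_nhdsGT (by norm_num)
  obtain ⟨ε, ⟨h0, h1⟩, h2, h3⟩ := (e1.and (e2.and e3)).exists
  refine Set.disjoint_left.1 hd ?_ (mem_triInt (y := x + ε • (a - x)) ?_ h2 h3)
  · exact (convex_segment a b).add_smul_sub_mem hxf (left_mem_segment ℝ a b) ⟨h0.le, h1.le⟩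
  · have : crs (x + ε • (a - x)) q r * crs p q r = ε * (crs a q r * crs p q r) := by
      subst hx; simp [crs]; ring
    rw [this]; positivity

lemma noCross_new {S : Finset Pt} (hgen : GenPos S) {p q r a b : Pt}
    (hp : p ∈ S) (hq : q ∈ S) (hr : r ∈ S) (ha : a ∈ S) (hb : b ∈ S) (hab : a ≠ b)
    (hpq : p ≠ q) (hpr : p ≠ r) (hqr : q ≠ r)
    (hd : Disjoint (segment ℝ a b) (triInt p q r)) (hne : s(a, b) ≠ s(q, r))
    {x : Pt} (hx1 : x ∈ segment ℝ q r) (hx2 : x ∈ segment ℝ a b) :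
    (x = q ∨ x = r) ∧ (x = a ∨ x = b) := by
  have key : ∀ {u v w : Pt}, u ∈ S → v ∈ S → w ∈ S → u ≠ v → w ∈ segment ℝ u v →
      w = u ∨ w = v := by
    intro u v w hu hv hw huv hm
    by_contra hc
    push Not at hc
    rw [mem_segment_iff_wbtw] at hm
    exact hgen u hu w hw v hv hc.1.symm huv hc.2 hm.collinear
  by_cases h1 : x = q ∨ x = r
  · refine ⟨h1, ?_⟩
    have hxS : x ∈ S := by rcases h1 with rfl | rfl <;> assumption
    exact key ha hb hxS hab hx2
  by_cases h2 : x = a ∨ x = b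
  · have hxS : x ∈ S := by rcases h2 with rfl | rfl <;> assumption
    exact absurd (key hq hr hxS hqr hx1) h1
  exfalso
  push Not at h1 h2
  have hD : crs p q r ≠ 0 := fun h => hgen p hp q hq r hr hpq hpr hqr (collinear_of_crs hqr h)
  have online : ∀ {c : Pt}, c ∈ S → crs c q r = 0 → c = q ∨ c = r := by
    intro c hc h
    by_contra hn
    push Not at hn
    exact hgen c hc q hq r hr hn.1 hn.2 hqr (collinear_of_crs hqr h)
  obtain ⟨u, t, hu, ht, hut, hxe⟩ := hx1
  obtain rfl : u = 1 - t := by linarith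
  have ht0 : 0 < t := by
    rcases ht.lt_or_eq with h | h
    · exact h
    · exfalso; apply h1.1; rw [← hxe, ← h]; simp
  have ht1 : t < 1 := by
    rcases hu.lt_or_eq with h | h
    · linarith
    · exfalso; apply h1.2; rw [← hxe, ← h, show t = 1 by linarith]; simp
  have hx2' := hx2
  obtain ⟨v, s, hv, hs, hvs, hxf⟩ := hx2'
  have hs0 : 0 < s := by
    rcases hs.lt_or_eq with h | h
    · exact h
    · exfalso; apply h2.1; rw [← hxf, ← h, show v = 1 by linarith]; simp
  have hv0 : 0 < v := by
    rcases hv.lt_or_eq with h | h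
    · exact h
    · exfalso; apply h2.2; rw [← hxf, ← h, show s = 1 by linarith]; simp
  have hx0 : crs x q r = 0 := by rw [← hxe]; simp [crs]; ring
  have hlin : v * crs a q r + s * crs b q r = 0 := by
    rw [← hx0, ← hxf]
    obtain rfl : v = 1 - s := by linarith
    simp [crs]; ring
  have hlin2 : v * (crs a q r * crs p q r) + s * (crs b q r * crs p q r) = 0 := by
    linear_combination crs p q r * hlin
  rcases lt_trichotomy (crs a q r * crs p q r) 0 with h | h | h
  · have hb' : 0 < crs b q r * crs p q r := by
      by_contra hc
      push Not at hc
      nlinarith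
    rw [segment_symm] at hd hx2
    exact push_in ht0 ht1 hxe.symm hx2 hb' hd
  · have ha0 : crs a q r = 0 := by simpa [hD] using h
    have hb0 : crs b q r = 0 := by
      rw [ha0] at hlin
      simpa [hs0.ne'] using hlin
    rcases online ha ha0 with rfl | rfl <;> rcases online hb hb0 with rfl | rfl
    · exact hab rfl
    · exact hne rfl
    · exact hne Sym2.eq_swap
    · exact hab rfl
  · exact push_in ht0 ht1 hxe.symm hx2 h hd

lemma card_ge {S : Finset Pt} {E : Finset (Sym2 Pt)} {p : Pt} (hp : p ∈ S)
    (hE : ∀ e ∈ E, ∀ x ∈ e, x ∈ S)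
    (hc : ∀ a ∈ S, Relation.ReflTransGen (fun a b => s(a, b) ∈ E) p a) :
    S.card ≤ E.card + 1 := by
  let G : SimpleGraph S := SimpleGraph.fromRel (fun a b => s(a.1, b.1) ∈ E)
  have hreach : ∀ a, Relation.ReflTransGen (fun a b => s(a, b) ∈ E) p a →
      ∃ ha : a ∈ S, G.Reachable ⟨p, hp⟩ ⟨a, ha⟩ := by
    intro a h
    induction h with
    | refl => exact ⟨hp, SimpleGraph.Reachable.refl _⟩
    | @tail b c hb hbc ih =>
      obtain ⟨hbS, hr⟩ := ih
      have hcS : c ∈ S := hE _ hbc c (by simp)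
      refine ⟨hcS, ?_⟩
      by_cases hbc' : b = c
      · subst hbc'; exact hr
      · refine hr.trans (SimpleGraph.Adj.reachable ?_)
        rw [SimpleGraph.fromRel_adj]
        exact ⟨by simpa using hbc', Or.inl hbc⟩
  have hconn : G.Connected := by
    rw [SimpleGraph.connected_iff_exists_forall_reachable]
    exact ⟨⟨p, hp⟩, fun w => (hreach w.1 (hc w.1 w.2)).2⟩
  have h1 := hconn.card_vert_le_card_edgeSet_add_one
  have h2 : Nat.card G.edgeSet ≤ Nat.card (E : Set (Sym2 Pt)) := by
    refine Nat.card_le_card_of_injective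
      (fun e => (⟨Sym2.map Subtype.val e.1, ?_⟩ : (E : Set (Sym2 Pt)))) ?_
    · obtain ⟨e, he⟩ := e
      induction e using Sym2.ind with
      | _ a b =>
        rw [SimpleGraph.mem_edgeSet, SimpleGraph.fromRel_adj] at he
        rcases he.2 with h | h
        · simpa using h
        · rw [Sym2.eq_swap] at h; simpa using h
    · intro e f hef
      have := congrArg Subtype.val hef
      exact Subtype.ext (Sym2.map.injective Subtype.val_injective this)
  simp at h1 h2
  omega

lemma rtg_symm {E : Finset (Sym2 Pt)} {a b : Pt}
    (h : Relation.ReflTransGen (fun a b => s(a, b) ∈ E) a b) :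
    Relation.ReflTransGen (fun a b => s(a, b) ∈ E) b a := by
  induction h with
  | refl => exact .refl
  | tail _ h ih => exact Relation.ReflTransGen.head (by rw [Sym2.eq_swap]; exact h) ih

lemma swap_case {S : Finset Pt} (hgen : GenPos S) {E : Finset (Sym2 Pt)} (hT : IsPST S E)
    {p q r : Pt} (hp : p ∈ S) (hq : q ∈ S) (hr : r ∈ S)
    (hpq' : p ≠ q) (hpr : p ≠ r) (hqr : q ≠ r) (hpq : s(p, q) ∈ E)
    (hempty : ∀ f ∈ E, Disjoint (segOf f) (triInt p q r))
    (hreach : Relation.ReflTransGen (fun a b => s(a, b) ∈ E.erase s(p, q)) p r)  :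
    IsPST S (insert (s(q, r)) (E.erase (s(p, q)))) := by
  obtain ⟨hE, hnc, hcard, hconn⟩ := hT
  have hE' : ∀ e ∈ insert (s(q, r)) (E.erase (s(p, q))), ¬ e.IsDiag ∧ ∀ p ∈ e, p ∈ S := by
    intro e he
    rcases Finset.mem_insert.1 he with rfl | he
    · refine ⟨by simpa using hqr, ?_⟩
      intro x hx
      rcases Sym2.mem_iff.1 hx with rfl | rfl <;> assumption
    · exact hE e (Finset.mem_of_mem_erase he)
  have hpq2 : Relation.ReflTransGen
      (fun a b => s(a, b) ∈ insert (s(q, r)) (E.erase (s(p, q)))) p q := by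
    refine Relation.ReflTransGen.tail (b := r) (Relation.ReflTransGen.mono (fun a b h =>
      Finset.mem_insert_of_mem h) _ _ hreach) ?_
    rw [Sym2.eq_swap]; exact Finset.mem_insert_self _ _
  have hall : ∀ a, Relation.ReflTransGen (fun a b => s(a, b) ∈ E) p a → Relation.ReflTransGen
      (fun a b => s(a, b) ∈ insert (s(q, r)) (E.erase (s(p, q)))) p a := by
    intro a h
    induction h with
    | refl => exact .refl
    | @tail b c hb hbc ih =>
      by_cases h : s(b, c) = s(p, q)
      · rcases Sym2.eq_iff.1 h with ⟨rfl, rfl⟩ | ⟨rfl, rfl⟩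
        · exact hpq2
        · exact .refl
      · exact ih.tail (Finset.mem_insert_of_mem (Finset.mem_erase.2 ⟨h, hbc⟩))
  have hpair : ∀ f ∈ E, f ≠ s(q, r) → ∀ x, x ∈ segOf s(q, r) → x ∈ segOf f →
      x ∈ s(q, r) ∧ x ∈ f := by
    intro f hf hne x hx1 hx2
    have hd := hempty f hf
    have hEf := hE f hf
    induction f using Sym2.ind with
    | _ a b =>
      simp only [Sym2.mem_iff]
      exact noCross_new hgen hp hq hr (hEf.2 a (by simp)) (hEf.2 b (by simp))
        (by simpa using hEf.1) hpq' hpr hqr hd hne hx1 hx2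
  refine ⟨hE', ?_, ?_, ?_⟩
  · intro e he f hf hef x hx
    rcases Finset.mem_insert.1 he with rfl | he <;> rcases Finset.mem_insert.1 hf with rfl | hf
    · exact absurd rfl hef
    · exact hpair f (Finset.mem_of_mem_erase hf) hef.symm x hx.1 hx.2
    · exact (hpair e (Finset.mem_of_mem_erase he) hef x hx.2 hx.1).symm
    · exact hnc e (Finset.mem_of_mem_erase he) f (Finset.mem_of_mem_erase hf) hef hx
  · have h1 := card_ge hp (fun e he => (hE' e he).2) (fun a ha => hall a (hconn p hp a ha))
    have h2 := Finset.card_insert_le (s(q, r)) (E.erase (s(p, q)))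
    have h3 := Finset.card_erase_add_one hpq
    omega
  · intro a ha b hb
    exact (rtg_symm (hall a (hconn p hp a ha))).trans (hall b (hconn p hp b hb))

/-- if `pq ∈ E` and the interior of the triangle `pqr` misses all edges of the
tree, then replacing `pq` by `pr` or by `qr` again yields a noncrossing spanning tree. -/
theorem stmt_2 (S : Finset Pt) (hgen : GenPos S) (E : Finset (Sym2 Pt)) (hT : IsPST S E)
    (p q r : Pt) (hp : p ∈ S) (hq : q ∈ S) (hr : r ∈ S)
    (hpq : s(p, q) ∈ E)
    (hempty : ∀ f ∈ E, Disjoint (segOf f) (triInt p q r)) :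
    IsPST S (insert (s(p, r)) (E.erase (s(p, q)))) ∨
    IsPST S (insert (s(q, r)) (E.erase (s(p, q)))) := by
  by_cases hpq' : p = q
  · exact absurd hpq' (by simpa using (hT.1 _ hpq).1)
  by_cases hpr : p = r
  · subst hpr
    right
    rw [Sym2.eq_swap (a := q), Finset.insert_erase hpq]
    exact hT
  by_cases hqr : q = r
  · subst hqr
    left
    rw [Finset.insert_erase hpq]
    exact hT
  have hdich : ∀ a, Relation.ReflTransGen (fun a b => s(a, b) ∈ E) p a →
      Relation.ReflTransGen (fun a b => s(a, b) ∈ E.erase s(p, q)) p a ∨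
      Relation.ReflTransGen (fun a b => s(a, b) ∈ E.erase s(p, q)) q a := by
    intro a h
    induction h with
    | refl => exact Or.inl .refl
    | @tail b c hb hbc ih =>
      by_cases h : s(b, c) = s(p, q)
      · rcases Sym2.eq_iff.1 h with ⟨rfl, rfl⟩ | ⟨rfl, rfl⟩
        · exact Or.inr .refl
        · exact Or.inl .refl
      · have hm := Finset.mem_erase.2 ⟨h, hbc⟩
        exact ih.imp (fun k => k.tail hm) (fun k => k.tail hm)
  rcases hdich r (hT.2.2.2 p hp r hr) with h | h
  · exact Or.inr (swap_case hgen hT hp hq hr hpq' hpr hqr hpq hempty h)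
  · left
    have hsw : s(p, q) = s(q, p) := Sym2.eq_swap
    have htri : triInt p q r = triInt q p r := by
      unfold triInt; rw [Set.insert_comm]
    rw [hsw] at h hpq ⊢
    rw [htri] at hempty
    exact swap_case hgen hT hq hp hr (Ne.symm hpq') hqr hpr hpq hempty h
end
end
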